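/- There exist constants L₀>0 and C>0 such that, for all L∈(0,L₀), E(L) ≥ 2 L^{-4/3} ∫₀¹ g(b) db − C L^{-1}. -/

import Mathlib

open MeasureTheory Real Set Filter Topology

noncomputable section

/-- The open square `Q_r = (-r/2, r/2) × (-r/2, r/2)`. -/
def Qsq (r : ℝ) : Set (ℝ × ℝ) := Ioo (-r/2) (r/2) ×ˢ Ioo (-r/2) (r/2)

/-- The vertical strip `S_R = (-R/2, R/2) × ℝ`. -/
def Strip (R : ℝ) : Set (ℝ × ℝ) := Ioo (-R/2) (R/2) ×ˢ (univ : Set ℝ)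

/-- The magnetic potential `A₀(x) = (-x₂/2, x₁/2)` of the constant unit magnetic field. -/
def A₀ (x : ℝ × ℝ) : ℝ × ℝ := (-x.2 / 2, x.1 / 2)

/-- The magnetic potential `A_van(x) = (-x₂²/2, 0)` generating the field `B(x) = x₂`. -/
def Avan (x : ℝ × ℝ) : ℝ × ℝ := (-x.2 ^ 2 / 2, 0)

/-- The magnetic gradient energy density `|(∇ - iA)u|²` at `x`. -/
def magGradSq (A : ℝ × ℝ → ℝ × ℝ) (u : ℝ × ℝ → ℂ) (x : ℝ × ℝ) : ℝ :=
  ‖fderiv ℝ u x (1, 0) - Complex.I * ((A x).1 : ℂ) * u x‖ ^ 2 +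
  ‖fderiv ℝ u x (0, 1) - Complex.I * ((A x).2 : ℂ) * u x‖ ^ 2

/-- The Ginzburg–Landau functional `F_{b,Q_r}` on the square `Q_r`. -/
def Fsq (b r : ℝ) (u : ℝ × ℝ → ℂ) : ℝ :=
  ∫ x in Qsq r, (b * magGradSq A₀ u x - ‖u x‖ ^ 2 + ‖u x‖ ^ 4 / 2)

/-- (Smooth surrogate of) membership in `H¹(Q_r; ℂ)`. -/
def MemH1sq (u : ℝ × ℝ → ℂ) : Prop := ContDiff ℝ 1 u

/-- (Smooth surrogate of) membership in `H¹₀(Q_r; ℂ)`: vanishing on the boundary. -/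
def MemH10sq (r : ℝ) (u : ℝ × ℝ → ℂ) : Prop :=
  ContDiff ℝ 1 u ∧ ∀ x ∈ frontier (Qsq r), u x = 0

/-- The Dirichlet ground-state energy `e_D(b, r)`. -/
def eD (b r : ℝ) : ℝ := sInf (Fsq b r '' {u | MemH10sq r u})

/-- The Neumann ground-state energy `e_N(b, r)`. -/
def eN (b r : ℝ) : ℝ := sInf (Fsq b r '' {u | MemH1sq u})

/-- The energy density of the strip functional `𝓔_{L,R}` at `x`. -/
def stripDensity (L : ℝ) (u : ℝ × ℝ → ℂ) (x : ℝ × ℝ) : ℝ :=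
  magGradSq Avan u x - L ^ (-(2:ℝ)/3) * ‖u x‖ ^ 2 + (L ^ (-(2:ℝ)/3) / 2) * ‖u x‖ ^ 4

/-- The strip functional `𝓔_{L,R}`. -/
def Estrip (L R : ℝ) (u : ℝ × ℝ → ℂ) : ℝ := ∫ x in Strip R, stripDensity L u x

/-- (Surrogate of) membership in the space `H¹_{mag,0}(S_R)`. -/
def MemH1mag0 (R : ℝ) (u : ℝ × ℝ → ℂ) : Prop :=
  ContDiff ℝ 1 u ∧
  IntegrableOn (fun x => ‖u x‖ ^ 2) (Strip R) ∧
  IntegrableOn (magGradSq Avan u) (Strip R) ∧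
  IntegrableOn (fun x => ‖u x‖ ^ 4) (Strip R) ∧
  ∀ x ∈ frontier (Strip R), u x = 0

/-- The ground-state energy `e_gs(L; R)` of the strip functional. -/
def egs (L R : ℝ) : ℝ := sInf (Estrip L R '' {u | MemH1mag0 R u})

/-- `g : (0,∞) → ℝ` is the thermodynamic limit of the Dirichlet square energies. -/
def IsLimitG (g : ℝ → ℝ) : Prop :=
  ∀ b > 0, Tendsto (fun r => eD b r / r ^ 2) atTop (nhds (g b))

/-- `E : (0,∞) → ℝ` is the large-`R` limit of the strip energies. -/
def IsLimitE (E : ℝ → ℝ) : Prop :=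
  ∀ L > 0, Tendsto (fun R => egs L R / R) atTop (nhds (E L))


lemma nsq (z : ℂ) : ‖z‖ ^ 2 = z.re ^ 2 + z.im ^ 2 := by
  rw [Complex.sq_norm, Complex.normSq_apply]; ring

/-- `v` is `C¹`, and vanishes (with its derivative) outside the slab `s < x₂ < s+1`. -/
def Slab (s : ℝ) (v : ℝ × ℝ → ℂ) : Prop :=
  ContDiff ℝ 1 v ∧ ∀ x : ℝ × ℝ, x.2 ∉ Ioo s (s + 1) → v x = 0 ∧ fderiv ℝ v x = 0

lemma frontier_strip (R : ℝ) (hR : 0 < R) :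
    frontier (Strip R) = {-R/2, R/2} ×ˢ (univ : Set ℝ) := by
  have : -R/2 < R/2 := by linarith
  rw [Strip, frontier_prod_univ_eq, frontier_Ioo this]

lemma meas_strip (R : ℝ) : MeasurableSet (Strip R) :=
  measurableSet_Ioo.prod MeasurableSet.univ

lemma integrableOn_slab {F : Type*} [NormedAddCommGroup F] (R a b : ℝ) (f : ℝ × ℝ → F)
    (hf : Continuous f)
    (h0 : ∀ x : ℝ × ℝ, x.2 ∉ Ioo a b → f x = 0) : IntegrableOn f (Strip R) := by
  have h1 : IntegrableOn f (Icc (-R/2) (R/2) ×ˢ Icc a b) :=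
    (hf.continuousOn).integrableOn_compact (isCompact_Icc.prod isCompact_Icc)
  have h2 : IntegrableOn f (Ioo (-R/2) (R/2) ×ˢ Ioo a b) :=
    h1.mono_set (prod_mono Ioo_subset_Icc_self Ioo_subset_Icc_self)
  refine h2.of_forall_sdiff_eq_zero (meas_strip R) ?_
  intro x hx
  apply h0
  intro h
  exact hx.2 ⟨hx.1.1, h⟩

lemma continuous_magGradSq {A : ℝ × ℝ → ℝ × ℝ} (hA : Continuous A) {u : ℝ × ℝ → ℂ}
    (hu : ContDiff ℝ 1 u) : Continuous (magGradSq A u) := by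
  have h1 : Continuous (fderiv ℝ u) := hu.continuous_fderiv one_ne_zero
  have h0 := hu.continuous
  unfold magGradSq
  fun_prop

lemma continuous_Avan : Continuous Avan := by unfold Avan; fun_prop
lemma continuous_A₀ : Continuous A₀ := by unfold A₀; fun_prop

lemma magGradSq_nonneg (A : ℝ × ℝ → ℝ × ℝ) (u : ℝ × ℝ → ℂ) (x) : 0 ≤ magGradSq A u x := by
  unfold magGradSq; positivity

lemma magGradSq_zero (A : ℝ × ℝ → ℝ × ℝ) (u : ℝ × ℝ → ℂ) (x) (h : u x = 0 ∧ fderiv ℝ u x = 0) :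
    magGradSq A u x = 0 := by
  unfold magGradSq; simp [h.1, h.2]

/-- integral over the strip of `∂₁ f`. -/
lemma div1 (R a b : ℝ) (hR : 0 < R) (f : ℝ × ℝ → ℝ) (hf : ContDiff ℝ 1 f)
    (h0 : ∀ x : ℝ × ℝ, x.2 ∉ Ioo a b → fderiv ℝ f x = 0)
    (hb : ∀ x ∈ frontier (Strip R), f x = 0) :
    ∫ x in Strip R, fderiv ℝ f x (1, 0) = 0 := by
  have h1 : Continuous (fderiv ℝ f) := hf.continuous_fderiv one_ne_zero
  have hi : IntegrableOn (fun x => fderiv ℝ f x (1, 0)) (Strip R) :=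
    integrableOn_slab R a b _ (by fun_prop) (fun x hx => by simp [h0 x hx])
  rw [Strip, Measure.volume_eq_prod] at hi ⊢
  rw [IntegrableOn, ← Measure.prod_restrict] at hi
  rw [← Measure.prod_restrict, integral_prod_symm _ hi]
  apply integral_eq_zero_of_ae
  filter_upwards with y
  have hlt : -R/2 ≤ R/2 := by linarith
  have : ∫ x in (-R/2)..(R/2), fderiv ℝ f (x, y) (1, 0) = f (R/2, y) - f (-R/2, y) := by
    apply intervalIntegral.integral_eq_sub_of_hasDerivAt (f := fun x => f (x, y))
    · intro x _
      have hd := (hf.differentiable one_ne_zero (x, y)).hasFDerivAt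
      exact hd.comp_hasDerivAt x ((hasDerivAt_id x).prodMk (hasDerivAt_const x y))
    · apply Continuous.intervalIntegrable; fun_prop
  rw [← integral_Ioc_eq_integral_Ioo, ← intervalIntegral.integral_of_le hlt, this,
    hb _ (by rw [frontier_strip R hR]; simp), hb _ (by rw [frontier_strip R hR]; simp)]
  simp

lemma div2 (R a b : ℝ) (hab : a < b) (f : ℝ × ℝ → ℝ) (hf : ContDiff ℝ 1 f)
    (h0 : ∀ x : ℝ × ℝ, x.2 ∉ Ioo a b → f x = 0 ∧ fderiv ℝ f x = 0) :
    ∫ x in Strip R, fderiv ℝ f x (0, 1) = 0 := by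
  have h1 : Continuous (fderiv ℝ f) := hf.continuous_fderiv one_ne_zero
  have hi : IntegrableOn (fun x => fderiv ℝ f x (0, 1)) (Strip R) :=
    integrableOn_slab R a b _ (by fun_prop) (fun x hx => by simp [(h0 x hx).2])
  rw [Strip, Measure.volume_eq_prod] at hi ⊢
  rw [IntegrableOn, ← Measure.prod_restrict] at hi
  rw [← Measure.prod_restrict, integral_prod _ hi]
  apply integral_eq_zero_of_ae
  filter_upwards with x
  have : ∫ y in a..b, fderiv ℝ f (x, y) (0, 1) = f (x, b) - f (x, a) := by
    apply intervalIntegral.integral_eq_sub_of_hasDerivAt (f := fun y => f (x, y))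
    · intro y _
      have hd := (hf.differentiable one_ne_zero (x, y)).hasFDerivAt
      exact hd.comp_hasDerivAt y ((hasDerivAt_const y x).prodMk (hasDerivAt_id y))
    · apply Continuous.intervalIntegrable; fun_prop
  have h3 : ∫ y in Ioc a b, fderiv ℝ f (x, y) (0, 1) = ∫ y in (univ : Set ℝ), fderiv ℝ f (x, y) (0, 1) := by
    symm
    apply setIntegral_eq_of_subset_of_forall_sdiff_eq_zero MeasurableSet.univ (subset_univ _)
    intro y hy
    rw [(h0 (x, y) ?_).2]; · rfl
    intro h; exact hy.2 ⟨h.1, h.2.le⟩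
  rw [← h3, ← intervalIntegral.integral_of_le hab.le, this, (h0 (x, b) (by simp)).1,
    (h0 (x, a) (by simp)).1]
  simp


lemma strip_translate (R h : ℝ) (G : ℝ × ℝ → ℝ) :
    ∫ x in Strip R, G (x + (0, h)) = ∫ x in Strip R, G x := by
  rw [← integral_indicator (meas_strip R), ← integral_indicator (meas_strip R),
    ← integral_add_right_eq_self ((Strip R).indicator G) ((0, h) : ℝ × ℝ)]
  congr 1
  ext x
  have : x + (0, h) ∈ Strip R ↔ x ∈ Strip R := by simp [Strip]
  by_cases hx : x ∈ Strip R
  · rw [indicator_of_mem hx, indicator_of_mem (this.2 hx)]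
  · rw [indicator_of_notMem hx, indicator_of_notMem (fun h => hx (this.1 h))]

def SlabR (s : ℝ) (v : ℝ × ℝ → ℝ) : Prop :=
  ContDiff ℝ 1 v ∧ ∀ x : ℝ × ℝ, x.2 ∉ Ioo s (s + 1) → v x = 0 ∧ fderiv ℝ v x = 0

lemma jac_even (R s h : ℝ) (hR : 0 < R) (p q : ℝ × ℝ → ℝ) (hp : SlabR s p) (hq : SlabR s q)
    (hpb : ∀ x ∈ frontier (Strip R), p x = 0) (hqb : ∀ x ∈ frontier (Strip R), q x = 0) :
    ∫ x in Strip R, (fderiv ℝ q x (1, 0) * (p (x + (0, h)) - p (x - (0, h)))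
      - fderiv ℝ p x (1, 0) * (q (x + (0, h)) - q (x - (0, h)))) = 0 := by
  have hp1 : Continuous (fderiv ℝ p) := hp.1.continuous_fderiv one_ne_zero
  have hq1 : Continuous (fderiv ℝ q) := hq.1.continuous_fderiv one_ne_zero
  have hpc := hp.1.continuous
  have hqc := hq.1.continuous
  have hpd := hp.1
  have hqd := hq.1
  set f : ℝ × ℝ → ℝ := fun x => q (x - (0, h)) * p x - p (x - (0, h)) * q x with hf
  have hfd : ∀ x, HasFDerivAt f
      ((q (x - (0, h)) • fderiv ℝ p x + p x • fderiv ℝ q (x - (0, h))) -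
       (p (x - (0, h)) • fderiv ℝ q x + q x • fderiv ℝ p (x - (0, h)))) x := by
    intro x
    have a1 := (hpd.differentiable one_ne_zero x).hasFDerivAt
    have a2 := (hqd.differentiable one_ne_zero x).hasFDerivAt
    have a3 := (hasFDerivAt_comp_sub (f := p) (a := (0, h)) (x := x)).2 (hpd.differentiable one_ne_zero (x - (0, h))).hasFDerivAt
    have a4 := (hasFDerivAt_comp_sub (f := q) (a := (0, h)) (x := x)).2 (hqd.differentiable one_ne_zero (x - (0, h))).hasFDerivAt
    exact (a4.mul a1).sub (a3.mul a2)
  have hfc : ContDiff ℝ 1 f := by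
    rw [hf]; fun_prop
  have key := div1 R s (s+1) hR f hfc (fun x hx => by
      rw [(hfd x).fderiv, (hp.2 x hx).1, (hp.2 x hx).2, (hq.2 x hx).1, (hq.2 x hx).2]; simp)
      (fun x hx => by simp [hf, hpb x hx, hqb x hx])
  have e1 : ∀ x, fderiv ℝ f x (1, 0) =
      (fderiv ℝ q (x - (0, h)) (1, 0) * p x - fderiv ℝ p (x - (0, h)) (1, 0) * q x)
      - (fderiv ℝ q x (1, 0) * p (x - (0, h)) - fderiv ℝ p x (1, 0) * q (x - (0, h))) := by
    intro x
    rw [(hfd x).fderiv]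
    simp
    ring
  simp_rw [e1] at key
  have i1 : IntegrableOn (fun x => fderiv ℝ q (x - (0, h)) (1, 0) * p x
      - fderiv ℝ p (x - (0, h)) (1, 0) * q x) (Strip R) :=
    integrableOn_slab R s (s+1) _ (by fun_prop) (fun x hx => by
      simp [(hp.2 x hx).1, (hq.2 x hx).1])
  have i2 : IntegrableOn (fun x => fderiv ℝ q x (1, 0) * p (x - (0, h))
      - fderiv ℝ p x (1, 0) * q (x - (0, h))) (Strip R) :=
    integrableOn_slab R s (s+1) _ (by fun_prop) (fun x hx => by
      simp [(hp.2 x hx).2, (hq.2 x hx).2])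
  have i3 : IntegrableOn (fun x => fderiv ℝ q x (1, 0) * p (x + (0, h))
      - fderiv ℝ p x (1, 0) * q (x + (0, h))) (Strip R) :=
    integrableOn_slab R s (s+1) _ (by fun_prop) (fun x hx => by
      simp [(hp.2 x hx).2, (hq.2 x hx).2])
  rw [integral_sub i1 i2, ← strip_translate R h] at key
  simp only [add_sub_cancel_right] at key
  rw [← integral_sub i3 i2] at key
  refine Eq.trans (integral_congr_ae ?_) key
  filter_upwards with x
  ring

lemma slab_lip (R s : ℝ) (p : ℝ × ℝ → ℝ) (hp : ContDiff ℝ 1 p) :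
    ∃ M, ∀ x ∈ Strip R, x.2 ∈ Ioo s (s+1) → ∀ h : ℝ, |h| < 1 →
      |p (x + (0, h)) - p (x - (0, h))| ≤ M * (2 * |h|) := by
  have hp1 : Continuous (fderiv ℝ p) := hp.continuous_fderiv one_ne_zero
  obtain ⟨M, hM⟩ := ((isCompact_Icc (a := -R/2) (b := R/2)).prod
    (isCompact_Icc (a := s-1) (b := s+2))).exists_bound_of_continuousOn hp1.continuousOn
  refine ⟨M, ?_⟩
  intro x hx hxs h hh
  have hcv : Convex ℝ (Icc (-R/2) (R/2) ×ˢ Icc (s-1) (s+2)) := (convex_Icc _ _).prod (convex_Icc _ _)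
  rw [abs_lt] at hh
  have := hcv.norm_image_sub_le_of_norm_fderiv_le (f := p) (𝕜 := ℝ) (C := M)
    (fun y _ => hp.differentiable one_ne_zero y) (fun y hy => hM y hy)
    (x := x - (0, h)) (y := x + (0, h))
    (by
      refine ⟨⟨?_, ?_⟩, ⟨?_, ?_⟩⟩ <;> simp <;> linarith [hx.1.1, hx.1.2, hxs.1, hxs.2])
    (by
      refine ⟨⟨?_, ?_⟩, ⟨?_, ?_⟩⟩ <;> simp <;> linarith [hx.1.1, hx.1.2, hxs.1, hxs.2])
  have e : ‖x + (0, h) - (x - (0, h))‖ = 2 * |h| := by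
    have : x + (0, h) - (x - (0, h)) = (0, 2 * h) := by
      ext <;> simp ; ring
    rw [this, Prod.norm_def]; simp
  rw [e] at this
  exact this

lemma slope_lim (p : ℝ × ℝ → ℝ) (hp : ContDiff ℝ 1 p) (x : ℝ × ℝ) :
    Tendsto (fun h : ℝ => h⁻¹ * (p (x + (0, h)) - p (x - (0, h)))) (𝓝[≠] 0)
      (𝓝 (2 * fderiv ℝ p x (0, 1))) := by
  have a1 : HasFDerivAt p (fderiv ℝ p x) x := (hp.differentiable one_ne_zero x).hasFDerivAt
  have z0 : ((0:ℝ), (0:ℝ)) = 0 := rfl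
  have l1 : HasDerivAt (fun h : ℝ => x + (0, h)) (0, 1) 0 := by
    simpa using ((hasDerivAt_const (0:ℝ) (0:ℝ)).prodMk (hasDerivAt_id (0:ℝ))).const_add x
  have l2 : HasDerivAt (fun h : ℝ => x - (0, h)) (-(0, 1)) 0 := by
    simpa using ((hasDerivAt_const (0:ℝ) (0:ℝ)).prodMk (hasDerivAt_id (0:ℝ))).const_sub x
  have b1 : HasFDerivAt p (fderiv ℝ p x) (x + (0, (0:ℝ))) := by
    rw [z0, add_zero]; exact a1
  have b2 : HasFDerivAt p (fderiv ℝ p x) (x - (0, (0:ℝ))) := by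
    rw [z0, sub_zero]; exact a1
  have c := (b1.comp_hasDerivAt (0:ℝ) l1).sub (b2.comp_hasDerivAt (0:ℝ) l2)
  rw [hasDerivAt_iff_tendsto_slope_zero] at c
  have e : (fderiv ℝ p x) (0, 1) - (fderiv ℝ p x) (-(0, 1)) = 2 * fderiv ℝ p x (0, 1) := by
    rw [map_neg]; ring
  rw [e] at c
  refine c.congr ?_
  intro h
  simp [z0]

lemma jac_zero (R s : ℝ) (hR : 0 < R) (p q : ℝ × ℝ → ℝ) (hp : SlabR s p) (hq : SlabR s q)
    (hpb : ∀ x ∈ frontier (Strip R), p x = 0) (hqb : ∀ x ∈ frontier (Strip R), q x = 0) :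
    ∫ x in Strip R, (fderiv ℝ q x (1, 0) * (2 * fderiv ℝ p x (0, 1))
      - fderiv ℝ p x (1, 0) * (2 * fderiv ℝ q x (0, 1))) = 0 := by
  have hp1 : Continuous (fderiv ℝ p) := hp.1.continuous_fderiv one_ne_zero
  have hq1 : Continuous (fderiv ℝ q) := hq.1.continuous_fderiv one_ne_zero
  have hpc := hp.1.continuous
  have hqc := hq.1.continuous
  obtain ⟨M, hM⟩ := slab_lip R s p hp.1
  obtain ⟨N, hN⟩ := slab_lip R s q hq.1
  set F : ℝ → ℝ × ℝ → ℝ := fun h x => fderiv ℝ q x (1, 0) * (h⁻¹ * (p (x + (0, h)) - p (x - (0, h))))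
      - fderiv ℝ p x (1, 0) * (h⁻¹ * (q (x + (0, h)) - q (x - (0, h)))) with hF
  have hz : ∀ h, ∫ x in Strip R, F h x = 0 := by
    intro h
    have := jac_even R s h hR p q hp hq hpb hqb
    have e : ∀ x, F h x = h⁻¹ * (fderiv ℝ q x (1, 0) * (p (x + (0, h)) - p (x - (0, h)))
      - fderiv ℝ p x (1, 0) * (q (x + (0, h)) - q (x - (0, h)))) := by
      intro x; simp only [hF]; ring
    simp_rw [e]
    rw [integral_const_mul, this, mul_zero]
  have lim : Tendsto (fun h => ∫ x in Strip R, F h x) (𝓝[≠] 0) (𝓝 (∫ x in Strip R, (fderiv ℝ q x (1, 0) * (2 * fderiv ℝ p x (0, 1))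
      - fderiv ℝ p x (1, 0) * (2 * fderiv ℝ q x (0, 1))))) := by
    apply tendsto_integral_filter_of_dominated_convergence
      (fun x => |fderiv ℝ q x (1, 0)| * (2 * M) + |fderiv ℝ p x (1, 0)| * (2 * N))
    · filter_upwards with h
      apply Continuous.aestronglyMeasurable
      simp only [hF]; fun_prop
    · have h1 : ∀ᶠ h : ℝ in 𝓝[≠] 0, |h| < 1 := by
        apply eventually_nhdsWithin_of_eventually_nhds
        have : Ioo (-1:ℝ) 1 ∈ 𝓝 (0:ℝ) := Ioo_mem_nhds (by norm_num) (by norm_num)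
        filter_upwards [this] with h hh
        rw [abs_lt]; exact hh
      filter_upwards [h1, self_mem_nhdsWithin] with h hh hne
      rw [ae_restrict_iff' (meas_strip R)]
      filter_upwards with x hx
      by_cases hxs : x.2 ∈ Ioo s (s+1)
      · have k1 := hM x hx hxs h hh
        have k2 := hN x hx hxs h hh
        have hpos : 0 < |h| := abs_pos.2 hne
        have m1 : |h⁻¹ * (p (x + (0, h)) - p (x - (0, h)))| ≤ 2 * M := by
          rw [abs_mul, abs_inv, inv_mul_le_iff₀ hpos]; linarith
        have m2 : |h⁻¹ * (q (x + (0, h)) - q (x - (0, h)))| ≤ 2 * N := by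
          rw [abs_mul, abs_inv, inv_mul_le_iff₀ hpos]; linarith
        simp only [hF, Real.norm_eq_abs]
        refine (abs_sub _ _).trans ?_
        rw [abs_mul, abs_mul (fderiv ℝ p x (1, 0))]
        exact add_le_add (mul_le_mul_of_nonneg_left m1 (abs_nonneg _))
          (mul_le_mul_of_nonneg_left m2 (abs_nonneg _))
      · simp [hF, (hp.2 x hxs).2, (hq.2 x hxs).2]
    · exact integrableOn_slab R s (s+1) _ (by fun_prop) (fun x hx => by
        simp [(hp.2 x hx).2, (hq.2 x hx).2])
    · filter_upwards with x
      exact ((slope_lim p hp.1 x).const_mul _).sub ((slope_lim q hq.1 x).const_mul _)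
  simp_rw [hz] at lim
  exact (tendsto_nhds_unique lim tendsto_const_nhds)


lemma fderiv_re {v : ℝ × ℝ → ℂ} (hv : ContDiff ℝ 1 v) (x : ℝ × ℝ) :
    HasFDerivAt (fun y => (v y).re) (Complex.reCLM.comp (fderiv ℝ v x)) x :=
  Complex.reCLM.hasFDerivAt.comp x (hv.differentiable one_ne_zero x).hasFDerivAt

lemma fderiv_im {v : ℝ × ℝ → ℂ} (hv : ContDiff ℝ 1 v) (x : ℝ × ℝ) :
    HasFDerivAt (fun y => (v y).im) (Complex.imCLM.comp (fderiv ℝ v x)) x :=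
  Complex.imCLM.hasFDerivAt.comp x (hv.differentiable one_ne_zero x).hasFDerivAt

lemma magGradSq_expand (A : ℝ × ℝ → ℝ × ℝ) (u : ℝ × ℝ → ℂ) (x : ℝ × ℝ) :
    magGradSq A u x = ((fderiv ℝ u x (1, 0)).re + (A x).1 * (u x).im) ^ 2
      + ((fderiv ℝ u x (1, 0)).im - (A x).1 * (u x).re) ^ 2
      + ((fderiv ℝ u x (0, 1)).re + (A x).2 * (u x).im) ^ 2
      + ((fderiv ℝ u x (0, 1)).im - (A x).2 * (u x).re) ^ 2 := by
  unfold magGradSq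
  rw [nsq, nsq]
  simp
  ring

lemma mag_commutator (R s : ℝ) (hR : 0 < R) (v : ℝ × ℝ → ℂ) (hv : Slab s v)
    (hb : ∀ x ∈ frontier (Strip R), v x = 0) :
    ∫ x in Strip R, x.2 * ‖v x‖ ^ 2 ≤ ∫ x in Strip R, magGradSq Avan v x := by
  have hv1 : Continuous (fderiv ℝ v) := hv.1.continuous_fderiv one_ne_zero
  have hvc := hv.1.continuous
  set p : ℝ × ℝ → ℝ := fun y => (v y).re with hp
  set q : ℝ × ℝ → ℝ := fun y => (v y).im with hq
  have fp : ∀ x, fderiv ℝ p x = Complex.reCLM.comp (fderiv ℝ v x) := fun x => (fderiv_re hv.1 x).fderiv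
  have fq : ∀ x, fderiv ℝ q x = Complex.imCLM.comp (fderiv ℝ v x) := fun x => (fderiv_im hv.1 x).fderiv
  have hpc : ContDiff ℝ 1 p := Complex.reCLM.contDiff.comp hv.1
  have hqc : ContDiff ℝ 1 q := Complex.imCLM.contDiff.comp hv.1
  have hps : SlabR s p := ⟨hpc, fun x hx => by
    rw [fp, (hv.2 x hx).2]; simp [hp, (hv.2 x hx).1]⟩
  have hqs : SlabR s q := ⟨hqc, fun x hx => by
    rw [fq, (hv.2 x hx).2]; simp [hq, (hv.2 x hx).1]⟩
  have J := jac_zero R s hR p q hps hqs (fun x hx => by simp [hp, hb x hx])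
    (fun x hx => by simp [hq, hb x hx])
  -- the function A |v|²
  set f : ℝ × ℝ → ℝ := fun x => (-x.2 ^ 2 / 2) * (p x ^ 2 + q x ^ 2) with hf
  have hfc : ContDiff ℝ 1 f := by rw [hf]; fun_prop
  have hfd : ∀ x, HasFDerivAt f ((-x.2 ^ 2 / 2) • (((2:ℕ) * p x ^ 1) • fderiv ℝ p x + ((2:ℕ) * q x ^ 1) • fderiv ℝ q x)
      + (p x ^ 2 + q x ^ 2) • ((-x.2) • ContinuousLinearMap.snd ℝ ℝ ℝ)) x := by
    intro x
    have a1 := (hpc.differentiable one_ne_zero x).hasFDerivAt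
    have a2 := (hqc.differentiable one_ne_zero x).hasFDerivAt
    have a3 : HasFDerivAt (fun x : ℝ × ℝ => -x.2 ^ 2 / 2) ((-x.2) • ContinuousLinearMap.snd ℝ ℝ ℝ) x := by
      have c : HasDerivAt (fun t : ℝ => -t ^ 2 / 2) (-x.2) x.2 := by
        have := ((hasDerivAt_pow 2 x.2).neg).div_const 2
        exact this.congr_deriv (by norm_num; ring)
      exact c.comp_hasFDerivAt x (hasFDerivAt_snd (𝕜 := ℝ) (p := x))
    exact (a3.mul ((a1.pow 2).add (a2.pow 2))).congr_fderiv (by simp)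
  have D := div2 R s (s+1) (by linarith) f hfc (fun x hx => by
    rw [(hfd x).fderiv]
    simp [hf, (hps.2 x hx).1, (hqs.2 x hx).1])
  have e1 : ∀ x, fderiv ℝ f x (0, 1) = -x.2 ^ 2 * (p x * fderiv ℝ p x (0, 1) + q x * fderiv ℝ q x (0, 1))
      - x.2 * (p x ^ 2 + q x ^ 2) := by
    intro x
    rw [(hfd x).fderiv]
    simp
    ring
  simp_rw [e1] at D
  have hp1 : Continuous (fderiv ℝ p) := hpc.continuous_fderiv one_ne_zero
  have hq1 : Continuous (fderiv ℝ q) := hqc.continuous_fderiv one_ne_zero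
  have hpcc := hpc.continuous
  have hqcc := hqc.continuous
  have i1 : IntegrableOn (fun x => x.2 * ‖v x‖ ^ 2) (Strip R) :=
    integrableOn_slab R s (s+1) _ (by fun_prop) (fun x hx => by simp [(hv.2 x hx).1])
  have i2 : IntegrableOn (magGradSq Avan v) (Strip R) :=
    integrableOn_slab R s (s+1) _ (continuous_magGradSq continuous_Avan hv.1)
      (fun x hx => magGradSq_zero _ _ _ (hv.2 x hx))
  have i3 : IntegrableOn (fun x => (fderiv ℝ q x (1, 0) * (2 * fderiv ℝ p x (0, 1))
      - fderiv ℝ p x (1, 0) * (2 * fderiv ℝ q x (0, 1)))) (Strip R) :=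
    integrableOn_slab R s (s+1) _ (by fun_prop) (fun x hx => by
      simp [(hps.2 x hx).2, (hqs.2 x hx).2])
  have i4 : IntegrableOn (fun x => -x.2 ^ 2 * (p x * fderiv ℝ p x (0, 1) + q x * fderiv ℝ q x (0, 1))
      - x.2 * (p x ^ 2 + q x ^ 2)) (Strip R) :=
    integrableOn_slab R s (s+1) _ (by fun_prop) (fun x hx => by
      simp [(hps.2 x hx).1, (hqs.2 x hx).1])
  have main : 0 ≤ ∫ x in Strip R, (magGradSq Avan v x - x.2 * ‖v x‖ ^ 2
      + (fderiv ℝ q x (1, 0) * (2 * fderiv ℝ p x (0, 1))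
      - fderiv ℝ p x (1, 0) * (2 * fderiv ℝ q x (0, 1)))
      - (-x.2 ^ 2 * (p x * fderiv ℝ p x (0, 1) + q x * fderiv ℝ q x (0, 1))
      - x.2 * (p x ^ 2 + q x ^ 2))) := by
    apply integral_nonneg
    intro x
    simp only [Pi.zero_apply]
    rw [magGradSq_expand, nsq, fp, fq]
    simp only [Avan, hp, hq, ContinuousLinearMap.comp_apply, Complex.reCLM_apply, Complex.imCLM_apply]
    generalize (fderiv ℝ v x (1, 0)).re = a
    generalize (fderiv ℝ v x (1, 0)).im = b
    generalize (fderiv ℝ v x (0, 1)).re = c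
    generalize (fderiv ℝ v x (0, 1)).im = d
    generalize (v x).re = P
    generalize (v x).im = Q
    generalize x.2 = y
    nlinarith [sq_nonneg ((a + -y^2/2 * Q) - d), sq_nonneg ((b - -y^2/2 * P) + c)]
  have i5 : IntegrableOn (fun x => magGradSq Avan v x - x.2 * ‖v x‖ ^ 2) (Strip R) := i2.sub i1
  have i6 : IntegrableOn (fun x => magGradSq Avan v x - x.2 * ‖v x‖ ^ 2
      + (fderiv ℝ q x (1, 0) * (2 * fderiv ℝ p x (0, 1))
      - fderiv ℝ p x (1, 0) * (2 * fderiv ℝ q x (0, 1)))) (Strip R) := i5.add i3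
  rw [integral_sub i6 i4, D, sub_zero, integral_add i5 i3, J, add_zero,
    integral_sub i2 i1] at main
  linarith


/-- linear potential for the constant field `s` in Landau gauge -/
def Alin (s : ℝ) (x : ℝ × ℝ) : ℝ × ℝ := (-(s * x.2) + s ^ 2 / 2, 0)

lemma continuous_Alin (s : ℝ) : Continuous (Alin s) := by unfold Alin; fun_prop

def Phi (r c : ℝ) (z : ℝ × ℝ) : ℝ × ℝ := r⁻¹ • z - (0, c)

def theta (r c : ℝ) (z : ℝ × ℝ) : ℝ := z.1 * z.2 / 2 - r * (c + r ^ 2 / 2) * z.1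

def Wc (r c : ℝ) (w : ℝ × ℝ → ℂ) (z : ℝ × ℝ) : ℂ :=
  Complex.exp ((theta r c z : ℂ) * Complex.I) * w (Phi r c z)

lemma Wc_norm (r c : ℝ) (w : ℝ × ℝ → ℂ) (z : ℝ × ℝ) : ‖Wc r c w z‖ = ‖w (Phi r c z)‖ := by
  rw [Wc, norm_mul, Complex.norm_exp_ofReal_mul_I, one_mul]

lemma Wc_contDiff (r c : ℝ) {w : ℝ × ℝ → ℂ} (hw : ContDiff ℝ 1 w) : ContDiff ℝ 1 (Wc r c w) := by
  have h1 : ContDiff ℝ 1 (fun z : ℝ × ℝ => ((theta r c z : ℝ) : ℂ)) := by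
    have h0 : ContDiff ℝ 1 (theta r c) := by
      unfold theta
      fun_prop
    exact Complex.ofRealCLM.contDiff.comp h0
  have h2 : ContDiff ℝ 1 (Phi r c) := by
    unfold Phi
    fun_prop
  unfold Wc
  fun_prop

lemma Wc_hasFDerivAt (r c : ℝ) {w : ℝ × ℝ → ℂ} (hw : ContDiff ℝ 1 w) (z : ℝ × ℝ) (e : ℝ × ℝ) :
    fderiv ℝ (Wc r c w) z e = Complex.exp ((theta r c z : ℂ) * Complex.I) *
      (Complex.I * (((e.1 * z.2 + z.1 * e.2) / 2 - r * (c + r ^ 2 / 2) * e.1 : ℝ) : ℂ) * w (Phi r c z)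
        + (r⁻¹ : ℝ) * fderiv ℝ w (Phi r c z) e) := by
  have hline : HasDerivAt (fun t : ℝ => z + t • e) e 0 := by
    simpa using ((hasDerivAt_id (0:ℝ)).smul_const e).const_add z
  have h0 : z + (0:ℝ) • e = z := by simp
  have hL : HasDerivAt (fun t : ℝ => Wc r c w (z + t • e)) (fderiv ℝ (Wc r c w) z e) 0 := by
    have := ((Wc_contDiff r c hw).differentiable one_ne_zero z).hasFDerivAt
    rw [← h0] at this
    have := this.comp_hasDerivAt (0:ℝ) hline
    rw [h0] at this
    exact this
  have h1 : HasDerivAt (fun t : ℝ => theta r c (z + t • e)) ((e.1 * z.2 + z.1 * e.2) / 2 - r * (c + r ^ 2 / 2) * e.1) 0 := by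
    have a : HasDerivAt (fun t : ℝ => z.1 + t * e.1) e.1 0 := by
      simpa using ((hasDerivAt_id (0:ℝ)).mul_const e.1).const_add z.1
    have b : HasDerivAt (fun t : ℝ => z.2 + t * e.2) e.2 0 := by
      simpa using ((hasDerivAt_id (0:ℝ)).mul_const e.2).const_add z.2
    have := ((a.mul b).div_const 2).sub (a.const_mul (r * (c + r ^ 2 / 2)))
    refine (this.congr_deriv ?_)
    simp
  have h2 : HasDerivAt (fun t : ℝ => Complex.exp ((theta r c (z + t • e) : ℂ) * Complex.I))
      (Complex.exp ((theta r c z : ℂ) * Complex.I) *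
        ((((e.1 * z.2 + z.1 * e.2) / 2 - r * (c + r ^ 2 / 2) * e.1 : ℝ) : ℂ) * Complex.I)) 0 := by
    have := (h1.ofReal_comp.mul_const Complex.I).cexp
    simpa [h0] using this
  have h3 : HasDerivAt (fun t : ℝ => w (Phi r c (z + t • e))) ((r⁻¹ : ℝ) * fderiv ℝ w (Phi r c z) e) 0 := by
    have l : HasDerivAt (fun t : ℝ => Phi r c (z + t • e)) (r⁻¹ • e) 0 := by
      unfold Phi
      exact (hline.const_smul r⁻¹).sub_const _
    have k := (hw.differentiable one_ne_zero (Phi r c z)).hasFDerivAt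
    have k' : HasFDerivAt w (fderiv ℝ w (Phi r c z)) (Phi r c (z + (0:ℝ) • e)) := by rw [h0]; exact k
    have := k'.comp_hasDerivAt (0:ℝ) l
    refine this.congr_deriv ?_
    rw [map_smul]; simp
  have h4 := h2.mul h3
  have := hL.unique h4
  rw [this]
  simp only [h0]
  ring

lemma Wc_mag (s c : ℝ) (hs : 0 < s) {w : ℝ × ℝ → ℂ} (hw : ContDiff ℝ 1 w) (z : ℝ × ℝ) :
    magGradSq A₀ (Wc (√s) c w) z = s⁻¹ * magGradSq (Alin s) w (Phi (√s) c z) := by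
  have hr : 0 < √s := Real.sqrt_pos.2 hs
  have hrr : √s * √s = s := Real.mul_self_sqrt hs.le
  set r := √s with hrdef
  have e1 : fderiv ℝ (Wc r c w) z (1, 0) - Complex.I * ((A₀ z).1 : ℂ) * Wc r c w z
      = Complex.exp ((theta r c z : ℂ) * Complex.I) * ((r⁻¹ : ℝ) *
        (fderiv ℝ w (Phi r c z) (1, 0) - Complex.I * ((Alin s (Phi r c z)).1 : ℂ) * w (Phi r c z))) := by
    have : (Alin s (Phi r c z)).1 = - (r * (z.2 - r * (c + r ^ 2 / 2))) := by
      simp only [Alin, Phi, Prod.snd_sub, Prod.smul_snd, smul_eq_mul]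
      rw [← hrr]; field_simp; ring
    rw [Wc_hasFDerivAt r c hw, this]
    have hrc : (r : ℂ) ≠ 0 := by exact_mod_cast hr.ne'
    simp only [A₀, Wc]
    push_cast
    field_simp
    ring
  have e2 : fderiv ℝ (Wc r c w) z (0, 1) - Complex.I * ((A₀ z).2 : ℂ) * Wc r c w z
      = Complex.exp ((theta r c z : ℂ) * Complex.I) * ((r⁻¹ : ℝ) *
        (fderiv ℝ w (Phi r c z) (0, 1) - Complex.I * ((Alin s (Phi r c z)).2 : ℂ) * w (Phi r c z))) := by
    rw [Wc_hasFDerivAt r c hw]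
    simp only [A₀, Wc, Alin]
    push_cast
    ring
  unfold magGradSq
  rw [e1, e2]
  simp only [norm_mul, Complex.norm_exp_ofReal_mul_I, one_mul, mul_pow]
  have : ‖((r⁻¹ : ℝ) : ℂ)‖ ^ 2 = s⁻¹ := by
    rw [Complex.norm_real, Real.norm_eq_abs, sq_abs, ← hrr, inv_pow, sq]
  rw [this]; ring

lemma Wc_zero (r c : ℝ) {w : ℝ × ℝ → ℂ} (hw : ContDiff ℝ 1 w) (z : ℝ × ℝ)
    (h : w (Phi r c z) = 0 ∧ fderiv ℝ w (Phi r c z) = 0) :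
    Wc r c w z = 0 ∧ fderiv ℝ (Wc r c w) z = 0 := by
  refine ⟨by rw [Wc, h.1, mul_zero], ?_⟩
  refine ContinuousLinearMap.ext fun e => ?_
  rw [Wc_hasFDerivAt r c hw, h.1, h.2]
  simp


/-- generic GL density -/
def dens (A : ℝ × ℝ → ℝ × ℝ) (b : ℝ) (u : ℝ × ℝ → ℂ) (x : ℝ × ℝ) : ℝ :=
  b * magGradSq A u x - ‖u x‖ ^ 2 + ‖u x‖ ^ 4 / 2

lemma continuous_dens {A : ℝ × ℝ → ℝ × ℝ} (hA : Continuous A) (b : ℝ) {u : ℝ × ℝ → ℂ}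
    (hu : ContDiff ℝ 1 u) : Continuous (dens A b u) := by
  have h1 := continuous_magGradSq hA hu
  have h2 := hu.continuous
  unfold dens
  fun_prop

lemma dens_zero (A : ℝ × ℝ → ℝ × ℝ) (b : ℝ) (u : ℝ × ℝ → ℂ) (x : ℝ × ℝ)
    (h : u x = 0 ∧ fderiv ℝ u x = 0) : dens A b u x = 0 := by
  rw [dens, magGradSq_zero A u x h, h.1]; simp

lemma dens_sum (A : ℝ × ℝ → ℝ × ℝ) (b : ℝ) (n : ℕ) (W : ℕ → ℝ × ℝ → ℂ)
    (hW : ∀ k, ContDiff ℝ 1 (W k)) (x : ℝ × ℝ) (k₀ : ℕ)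
    (h : ∀ j, j ≠ k₀ → W j x = 0 ∧ fderiv ℝ (W j) x = 0) :
    dens A b (fun z => ∑ k ∈ Finset.range n, W k z) x = ∑ k ∈ Finset.range n, dens A b (W k) x := by
  have hs : (fun z => ∑ k ∈ Finset.range n, W k z) x = ∑ k ∈ Finset.range n, W k x := rfl
  have hd : fderiv ℝ (fun z => ∑ k ∈ Finset.range n, W k z) x = ∑ k ∈ Finset.range n, fderiv ℝ (W k) x :=
    fderiv_fun_sum (fun k _ => (hW k).differentiable one_ne_zero x)
  by_cases hk : k₀ ∈ Finset.range n
  · rw [Finset.sum_eq_single_of_mem k₀ hk (fun j _ hj => (h j hj).1)] at hs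
    rw [Finset.sum_eq_single_of_mem k₀ hk (fun j _ hj => (h j hj).2)] at hd
    rw [Finset.sum_eq_single_of_mem k₀ hk (fun j _ hj => dens_zero A b (W j) x (h j hj))]
    simp only [dens, magGradSq]
    simp only at hs
    rw [hs, hd]
  · have hne : ∀ k ∈ Finset.range n, k ≠ k₀ := fun k hk' e => hk (e ▸ hk')
    rw [Finset.sum_eq_zero (fun j hj => (h j (hne j hj)).1)] at hs
    rw [Finset.sum_eq_zero (fun j hj => (h j (hne j hj)).2)] at hd
    rw [Finset.sum_eq_zero (fun j hj => dens_zero A b (W j) x (h j (hne j hj)))]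
    exact dens_zero _ _ _ _ ⟨hs, hd⟩

lemma meas_Q (r : ℝ) : MeasurableSet (Qsq r) := measurableSet_Ioo.prod measurableSet_Ioo

lemma integrableOn_Q {f : ℝ × ℝ → ℝ} (hf : Continuous f) (r : ℝ) : IntegrableOn f (Qsq r) :=
  ((hf.continuousOn).integrableOn_compact
    ((isCompact_Icc (a := -r/2) (b := r/2)).prod (isCompact_Icc (a := -r/2) (b := r/2)))).mono_set
    (prod_mono Ioo_subset_Icc_self Ioo_subset_Icc_self)

lemma vol_Q (r : ℝ) (hr : 0 ≤ r) : (volume (Qsq r)).toReal = r ^ 2 := by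
  rw [Qsq, Measure.volume_eq_prod, Measure.prod_prod, Real.volume_Ioo, ENNReal.toReal_mul,
    ENNReal.toReal_ofReal (by linarith)]
  ring

lemma Fsq_lb (b r : ℝ) (hb : 0 ≤ b) (hr : 0 ≤ r) (u : ℝ × ℝ → ℂ) (hu : ContDiff ℝ 1 u) :
    -(r ^ 2 / 2) ≤ Fsq b r u := by
  have h1 : ∫ x in Qsq r, (-(1/2) : ℝ) ≤ ∫ x in Qsq r, dens A₀ b u x := by
    apply setIntegral_mono_on (integrableOn_Q continuous_const r)
      (integrableOn_Q (continuous_dens continuous_A₀ b hu) r) (meas_Q r)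
    intro x _
    have := mul_nonneg hb (magGradSq_nonneg A₀ u x)
    unfold dens
    nlinarith [sq_nonneg (‖u x‖ ^ 2 - 1)]
  rw [setIntegral_const, Measure.real, vol_Q r hr] at h1
  have : Fsq b r u = ∫ x in Qsq r, dens A₀ b u x := rfl
  rw [this]
  simp at h1
  linarith

lemma eD_bdd (b r : ℝ) (hb : 0 ≤ b) (hr : 0 ≤ r) : BddBelow (Fsq b r '' {u | MemH10sq r u}) := by
  refine ⟨-(r ^ 2 / 2), ?_⟩
  rintro _ ⟨u, hu, rfl⟩
  exact Fsq_lb b r hb hr u hu.1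

lemma zero_mem (r : ℝ) : MemH10sq r (fun _ => 0) := ⟨contDiff_const, fun _ _ => rfl⟩

lemma Fsq_zero (b r : ℝ) : Fsq b r (fun _ => 0) = 0 := by
  simp [Fsq, magGradSq]

lemma eD_nonempty (b r : ℝ) : (Fsq b r '' {u | MemH10sq r u}).Nonempty :=
  ⟨_, _, zero_mem r, rfl⟩

lemma eD_nonpos (b r : ℝ) (hb : 0 ≤ b) (hr : 0 ≤ r) : eD b r ≤ 0 :=
  csInf_le (eD_bdd b r hb hr) ⟨_, zero_mem r, Fsq_zero b r⟩

lemma eD_lb (b r : ℝ) (hb : 0 ≤ b) (hr : 0 ≤ r) : -(r ^ 2 / 2) ≤ eD b r := by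
  apply le_csInf (eD_nonempty b r)
  rintro _ ⟨u, hu, rfl⟩
  exact Fsq_lb b r hb hr u hu.1

lemma eD_mono (b b' r : ℝ) (hb : 0 ≤ b) (hbb : b ≤ b') (hr : 0 ≤ r) : eD b r ≤ eD b' r := by
  apply le_csInf (eD_nonempty b' r)
  rintro _ ⟨u, hu, rfl⟩
  refine (csInf_le (eD_bdd b r hb hr) ⟨u, hu, rfl⟩).trans ?_
  apply setIntegral_mono_on (integrableOn_Q (continuous_dens continuous_A₀ b hu.1) r)
      (integrableOn_Q (continuous_dens continuous_A₀ b' hu.1) r) (meas_Q r)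
  intro x _
  have := mul_le_mul_of_nonneg_right hbb (magGradSq_nonneg A₀ u x)
  unfold dens
  linarith

lemma h_bounds (b r : ℝ) (hb : 0 ≤ b) (hr : 0 < r) : -(1/2) ≤ eD b r / r ^ 2 ∧ eD b r / r ^ 2 ≤ 0 := by
  have h2 : 0 < r ^ 2 := by positivity
  constructor
  · rw [le_div_iff₀ h2]; linarith [eD_lb b r hb hr.le]
  · exact div_nonpos_of_nonpos_of_nonneg (eD_nonpos b r hb hr.le) h2.le

lemma g_bounds (g : ℝ → ℝ) (hg : IsLimitG g) (b : ℝ) (hb : 0 < b) : -(1/2) ≤ g b ∧ g b ≤ 0 := by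
  constructor
  · apply ge_of_tendsto (hg b hb)
    filter_upwards [eventually_gt_atTop 0] with r hr
    exact (h_bounds b r hb.le hr).1
  · apply le_of_tendsto (hg b hb)
    filter_upwards [eventually_gt_atTop 0] with r hr
    exact (h_bounds b r hb.le hr).2

lemma g_mono (g : ℝ → ℝ) (hg : IsLimitG g) : MonotoneOn g (Ioi 0) := by
  intro b hb b' hb' hbb
  apply le_of_tendsto_of_tendsto (hg b hb) (hg b' hb')
  filter_upwards [eventually_gt_atTop 0] with r hr
  have h2 : 0 < r ^ 2 := by positivity
  exact div_le_div_of_nonneg_right (eD_mono b b' r (le_of_lt hb) hbb hr.le) h2.le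

lemma integral_Phi (r c : ℝ) (hr : 0 < r) (f : ℝ × ℝ → ℝ) :
    ∫ z, f (Phi r c z) = r ^ 2 * ∫ x, f x := by
  have h1 := Measure.integral_comp_inv_smul (μ := (volume : Measure (ℝ × ℝ)))
    (fun x => f (x - (0, c))) r
  have h2 := integral_sub_right_eq_self (μ := (volume : Measure (ℝ × ℝ))) f ((0, c) : ℝ × ℝ)
  rw [h2] at h1
  simp only [Module.finrank_prod, Module.finrank_self] at h1
  rw [show (1 + 1 : ℕ) = 2 from rfl, abs_of_pos (by positivity), smul_eq_mul] at h1
  exact h1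

lemma stack (s σ : ℝ) (hs : 0 < s) (hσ : 0 ≤ σ) (n : ℕ) (hn : 0 < n) (w : ℝ × ℝ → ℂ) (hw : Slab s w)
    (hb : ∀ x ∈ frontier (Strip n), w x = 0) :
    eD (s * σ) (n * √s) ≤ s * n * ∫ x in Strip n, dens (Alin s) σ w x := by
  have hr : 0 < √s := Real.sqrt_pos.2 hs
  have hrr : √s ^ 2 = s := Real.sq_sqrt hs.le
  set r := √s with hrdef
  have hnR : (0:ℝ) < n := by exact_mod_cast hn
  set c : ℕ → ℝ := fun k => -n/2 + k - s with hc
  set W : ℝ × ℝ → ℂ := fun z => ∑ k ∈ Finset.range n, Wc r (c k) w z with hWdef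
  have hWk : ∀ k, ContDiff ℝ 1 (Wc r (c k) w) := fun k => Wc_contDiff r (c k) hw.1
  have hPhi2 : ∀ k z, (Phi r (c k) z).2 ∈ Ioo s (s+1) ↔ z.2 / r ∈ Ioo (-(n:ℝ)/2 + k) (-(n:ℝ)/2 + k + 1) := by
    intro k z
    have : (Phi r (c k) z).2 = z.2 / r - (-(n:ℝ)/2 + k) + s := by
      simp only [Phi, hc, Prod.snd_sub, Prod.smul_snd, smul_eq_mul]; ring
    rw [this, mem_Ioo, mem_Ioo]
    constructor
    · rintro ⟨h1, h2⟩; constructor <;> linarith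
    · rintro ⟨h1, h2⟩; constructor <;> linarith
  have hPhi1 : ∀ k z, (Phi r (c k) z).1 = z.1 / r := by
    intro k z
    simp only [Phi, Prod.fst_sub, Prod.smul_fst, smul_eq_mul]; ring
  have hzero : ∀ (k : ℕ) (z : ℝ × ℝ), z.2 / r ∉ Ioo (-(n:ℝ)/2 + k) (-(n:ℝ)/2 + k + 1) →
      Wc r (c k) w z = 0 ∧ fderiv ℝ (Wc r (c k) w) z = 0 := by
    intro k z hz
    exact Wc_zero r (c k) hw.1 z (hw.2 _ (fun h => hz ((hPhi2 k z).1 h)))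
  have hWmem : MemH10sq (n * r) W := by
    refine ⟨ContDiff.sum (fun k _ => hWk k), ?_⟩
    intro z hz
    apply Finset.sum_eq_zero
    intro k hk
    have hkn : (k:ℝ) + 1 ≤ n := by exact_mod_cast Finset.mem_range.1 hk
    have hk0 : (0:ℝ) ≤ k := Nat.cast_nonneg k
    have hlt : -(n * r) / 2 < n * r / 2 := by nlinarith [mul_pos hnR hr]
    rw [Qsq, frontier_prod_eq, frontier_Ioo hlt, closure_Ioo hlt.ne] at hz
    rcases hz with hz | hz
    · have hz2 := hz.2
      apply (hzero k z _).1
      rcases hz2 with h | h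
      · rw [h]
        have : -(n * r) / 2 / r = -(n:ℝ)/2 := by field_simp
        rw [this]; intro h'; linarith [h'.1]
      · rw [mem_singleton_iff] at h
        rw [h]
        have : (n * r) / 2 / r = (n:ℝ)/2 := by field_simp
        rw [this]; intro h'; linarith [h'.2]
    · have : w (Phi r (c k) z) = 0 := by
        apply hb
        rw [frontier_strip _ hnR]
        refine ⟨?_, mem_univ _⟩
        rw [hPhi1]
        rcases hz.1 with h | h
        · left; rw [h]; field_simp
        · right; rw [mem_singleton_iff] at h; rw [h, mem_singleton_iff]; field_simp
      rw [Wc, this, mul_zero]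
  have hle : eD (s * σ) (n * r) ≤ Fsq (s * σ) (n * r) W :=
    csInf_le (eD_bdd _ _ (by positivity) (by positivity)) ⟨W, hWmem, rfl⟩
  refine hle.trans (le_of_eq ?_)
  have hdens : ∀ z, dens A₀ (s * σ) W z = ∑ k ∈ Finset.range n, dens A₀ (s * σ) (Wc r (c k) w) z := by
    intro z
    apply dens_sum A₀ (s * σ) n (fun k => Wc r (c k) w) hWk z (⌊z.2 / r + n / 2⌋₊)
    intro j hj
    apply hzero
    intro h
    apply hj
    symm
    rw [Nat.floor_eq_iff (by linarith [h.1, Nat.cast_nonneg (α := ℝ) j])]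
    constructor <;> linarith [h.1, h.2]
  have hk : ∀ k ∈ Finset.range n, ∫ z in Qsq (n * r), dens A₀ (s * σ) (Wc r (c k) w) z
      = s * ∫ x in Strip n, dens (Alin s) σ w x := by
    intro k hk
    have hkn : (k:ℝ) + 1 ≤ n := by exact_mod_cast Finset.mem_range.1 hk
    have hk0 : (0:ℝ) ≤ k := Nat.cast_nonneg k
    rw [← integral_indicator (meas_Q _), ← integral_indicator (meas_strip _), ← hrr, ← integral_Phi r (c k) hr]
    congr 1
    ext z
    have hval : dens A₀ (r ^ 2 * σ) (Wc r (c k) w) z = dens (Alin (r ^ 2)) σ w (Phi r (c k) z) := by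
      rw [hrr]
      unfold dens
      rw [Wc_norm, hrdef, Wc_mag s (c k) hs hw.1]
      field_simp
    by_cases hz2 : z.2 / r ∈ Ioo (-(n:ℝ)/2 + k) (-(n:ℝ)/2 + k + 1)
    · have hiff : z ∈ Qsq (n * r) ↔ Phi r (c k) z ∈ Strip n := by
        have a1 : -(n * r) / 2 < z.2 := by
          have : -(n:ℝ)/2 < z.2 / r := by linarith [hz2.1]
          rw [lt_div_iff₀ hr] at this; linarith
        have a2 : z.2 < (n * r) / 2 := by
          have : z.2 / r < (n:ℝ)/2 := by linarith [hz2.2]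
          rw [div_lt_iff₀ hr] at this; linarith
        simp only [Qsq, Strip, mem_prod, mem_Ioo, mem_univ, and_true, hPhi1, a1, a2]
        rw [lt_div_iff₀ hr, div_lt_iff₀ hr]
        constructor
        · rintro ⟨h1, h2⟩; constructor <;> linarith
        · rintro ⟨h1, h2⟩; constructor <;> linarith
      by_cases hz : z ∈ Qsq (n * r)
      · rw [indicator_of_mem hz, indicator_of_mem (hiff.1 hz), hval]
      · rw [indicator_of_notMem hz, indicator_of_notMem (fun h => hz (hiff.2 h))]
    · have z1 : dens A₀ (r ^ 2 * σ) (Wc r (c k) w) z = 0 := dens_zero _ _ _ _ (hzero k z hz2)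
      have z2 := hval ▸ z1
      rw [indicator_apply_eq_zero.2 (fun _ => z1), indicator_apply_eq_zero.2 (fun _ => z2)]
  have : Fsq (s * σ) (n * r) W = ∫ z in Qsq (n * r), dens A₀ (s * σ) W z := rfl
  rw [this]
  simp_rw [hdens]
  rw [integral_finsetSum _ (fun k _ => integrableOn_Q (continuous_dens continuous_A₀ _ (hWk k)) _),
    Finset.sum_congr rfl hk]
  simp
  ring


structure IsCut (χ : ℝ → ℝ) : Prop where
  smooth : ContDiff ℝ 1 χ
  nonneg : ∀ y, 0 ≤ χ y
  le_one : ∀ y, χ y ≤ 1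
  supp : ∀ y, y ∉ Ioo (0:ℝ) 1 → χ y = 0
  symm : ∀ y, χ (1 - y) = χ y

lemma IsCut.deriv_zero {χ : ℝ → ℝ} (h : IsCut χ) (y : ℝ) (hy : y ∉ Ioo (0:ℝ) 1) : deriv χ y = 0 := by
  apply IsLocalMin.deriv_eq_zero
  filter_upwards with z
  rw [h.supp y hy]; exact h.nonneg z

def loc (χ : ℝ → ℝ) (s : ℝ) (u : ℝ × ℝ → ℂ) (y : ℝ × ℝ) : ℂ := (χ (y.2 - s) : ℂ) * u y

lemma loc_contDiff {χ : ℝ → ℝ} (h : IsCut χ) (s : ℝ) {u : ℝ × ℝ → ℂ} (hu : ContDiff ℝ 1 u) :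
    ContDiff ℝ 1 (loc χ s u) := by
  have h1 : ContDiff ℝ 1 (fun y : ℝ × ℝ => χ (y.2 - s)) := by
    have := h.smooth
    fun_prop
  have h2 : ContDiff ℝ 1 (fun y : ℝ × ℝ => ((χ (y.2 - s) : ℝ) : ℂ)) := Complex.ofRealCLM.contDiff.comp h1
  exact h2.mul hu

lemma loc_fderiv {χ : ℝ → ℝ} (h : IsCut χ) (s : ℝ) {u : ℝ × ℝ → ℂ} (hu : ContDiff ℝ 1 u) (x e : ℝ × ℝ) :
    fderiv ℝ (loc χ s u) x e = (χ (x.2 - s) : ℂ) * fderiv ℝ u x e + ((deriv χ (x.2 - s) * e.2 : ℝ) : ℂ) * u x := by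
  have c : HasDerivAt χ (deriv χ (x.2 - s)) (x.2 - s) :=
    (h.smooth.differentiable one_ne_zero (x.2 - s)).hasDerivAt
  have l : HasFDerivAt (fun y : ℝ × ℝ => y.2 - s) (ContinuousLinearMap.snd ℝ ℝ ℝ) x :=
    (hasFDerivAt_snd (𝕜 := ℝ) (p := x)).sub_const s
  have a1 : HasFDerivAt (fun y : ℝ × ℝ => ((χ (y.2 - s) : ℝ) : ℂ)) (Complex.ofRealCLM.comp (deriv χ (x.2 - s) • ContinuousLinearMap.snd ℝ ℝ ℝ)) x :=
    Complex.ofRealCLM.hasFDerivAt.comp x (c.comp_hasFDerivAt x l)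
  have a2 := a1.mul (hu.differentiable one_ne_zero x).hasFDerivAt
  have : HasFDerivAt (loc χ s u) _ x := a2
  rw [this.fderiv]
  simp
  ring

lemma loc_slab {χ : ℝ → ℝ} (h : IsCut χ) (s : ℝ) {u : ℝ × ℝ → ℂ} (hu : ContDiff ℝ 1 u) :
    Slab s (loc χ s u) := by
  refine ⟨loc_contDiff h s hu, ?_⟩
  intro x hx
  have hx' : x.2 - s ∉ Ioo (0:ℝ) 1 := by
    intro h; apply hx; constructor <;> linarith [h.1, h.2]
  refine ⟨by simp [loc, h.supp _ hx'], ?_⟩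
  refine ContinuousLinearMap.ext fun e => ?_
  rw [loc_fderiv h s hu, h.supp _ hx', h.deriv_zero _ hx']
  simp

def Td (κ K : ℝ) (v : ℝ × ℝ → ℂ) (x : ℝ × ℝ) : ℝ :=
  magGradSq Avan v x - K * ‖v x‖ ^ 2 + κ / 2 * ‖v x‖ ^ 4

def Tl (χ : ℝ → ℝ) (κ K R : ℝ) (u : ℝ × ℝ → ℂ) (s : ℝ) : ℝ :=
  ∫ x in Strip R, Td κ K (loc χ s u) x

lemma Td_integrable (κ K R s : ℝ) {v : ℝ × ℝ → ℂ} (hv : Slab s v) : IntegrableOn (Td κ K v) (Strip R) := by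
  refine integrableOn_slab R s (s+1) _ ?_ ?_
  · have h1 := continuous_magGradSq continuous_Avan hv.1
    have h2 := hv.1.continuous
    unfold Td; fun_prop
  · intro x hx
    rw [Td, magGradSq_zero _ _ _ (hv.2 x hx), (hv.2 x hx).1]; simp

lemma tile_outer (κ K R s : ℝ) (hκ : 0 ≤ κ) (hR : 0 < R) (hs : K ≤ s) (v : ℝ × ℝ → ℂ) (hv : Slab s v)
    (hb : ∀ x ∈ frontier (Strip R), v x = 0) : 0 ≤ ∫ x in Strip R, Td κ K v x := by
  have hc := mag_commutator R s hR v hv hb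
  have hvc := hv.1.continuous
  have i1 : IntegrableOn (fun x => x.2 * ‖v x‖ ^ 2) (Strip R) :=
    integrableOn_slab R s (s+1) _ (by fun_prop) (fun x hx => by simp [(hv.2 x hx).1])
  have i2 : IntegrableOn (magGradSq Avan v) (Strip R) :=
    integrableOn_slab R s (s+1) _ (continuous_magGradSq continuous_Avan hv.1)
      (fun x hx => magGradSq_zero _ _ _ (hv.2 x hx))
  have h1 : 0 ≤ ∫ x in Strip R, (magGradSq Avan v x - x.2 * ‖v x‖ ^ 2) := by
    rw [integral_sub i2 i1]; linarith
  refine h1.trans ?_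
  apply setIntegral_mono_on (i2.sub i1) (Td_integrable κ K R s hv) (meas_strip R)
  intro x _
  by_cases hx : x.2 ∈ Ioo s (s+1)
  · simp only [Pi.sub_apply]
    unfold Td
    have : K * ‖v x‖ ^ 2 ≤ x.2 * ‖v x‖ ^ 2 := by
      apply mul_le_mul_of_nonneg_right _ (by positivity)
      linarith [hx.1]
    have : 0 ≤ κ / 2 * ‖v x‖ ^ 4 := by positivity
    linarith
  · simp [Td, (hv.2 x hx).1]

lemma tile_trivial (κ K R s : ℝ) (hκ : 0 < κ) (hR : 0 < R) (v : ℝ × ℝ → ℂ) (hv : Slab s v) :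
    -(K ^ 2 / (2 * κ)) * R ≤ ∫ x in Strip R, Td κ K v x := by
  set B : Set (ℝ × ℝ) := Ioo (-R/2) (R/2) ×ˢ Ioo s (s+1) with hB
  have hBm : MeasurableSet B := measurableSet_Ioo.prod measurableSet_Ioo
  have hsub : B ⊆ Strip R := prod_mono subset_rfl (subset_univ _)
  have hvol : (volume B).toReal = R := by
    rw [hB, Measure.volume_eq_prod, Measure.prod_prod, Real.volume_Ioo, Real.volume_Ioo, ENNReal.toReal_mul,
      ENNReal.toReal_ofReal (by linarith), ENNReal.toReal_ofReal (by linarith)]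
    ring
  have hfin : volume B ≠ ⊤ := by
    intro h; rw [h] at hvol; simp at hvol; linarith
  have e1 : ∫ x in Strip R, Td κ K v x = ∫ x in B, Td κ K v x := by
    apply setIntegral_eq_of_subset_of_forall_sdiff_eq_zero (meas_strip R) hsub
    intro x hx
    have : x.2 ∉ Ioo s (s+1) := fun h => hx.2 ⟨hx.1.1, h⟩
    rw [Td, magGradSq_zero _ _ _ (hv.2 x this), (hv.2 x this).1]; simp
  rw [e1]
  have e2 : ∫ x in B, (-(K ^ 2 / (2 * κ)) : ℝ) = -(K ^ 2 / (2 * κ)) * R := by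
    rw [setIntegral_const, Measure.real, hvol, smul_eq_mul]; ring
  rw [← e2]
  apply setIntegral_mono_on (integrableOn_const hfin) ((Td_integrable κ K R s hv).mono_set hsub) hBm
  intro x _
  have := magGradSq_nonneg Avan v x
  unfold Td
  have h2 : 0 ≤ κ / 2 * (‖v x‖ ^ 2 - K / κ) ^ 2 := by positivity
  have h3 : κ / 2 * (‖v x‖ ^ 2 - K / κ) ^ 2 = κ / 2 * ‖v x‖ ^ 4 - K * ‖v x‖ ^ 2 + K ^ 2 / (2 * κ) := by
    field_simp; ring
  linarith

lemma mag_compare (s δ : ℝ) (hδ : 0 < δ) (v : ℝ × ℝ → ℂ) (x : ℝ × ℝ) (hx : x.2 ∈ Ioo s (s+1)) :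
    (1 - δ) * magGradSq (Alin s) v x - 1 / (4 * δ) * ‖v x‖ ^ 2 ≤ magGradSq Avan v x := by
  rw [magGradSq_expand, magGradSq_expand, nsq]
  simp only [Alin, Avan]
  generalize (fderiv ℝ v x (1, 0)).re = a
  generalize (fderiv ℝ v x (1, 0)).im = b
  generalize (fderiv ℝ v x (0, 1)).re = c
  generalize (fderiv ℝ v x (0, 1)).im = d
  generalize (v x).re = P
  generalize (v x).im = Q
  set y := x.2 - s with hy
  have hxy : x.2 = s + y := by rw [hy]; ring
  have hy0 : 0 ≤ y := by linarith [hx.1]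
  have hy1 : y ≤ 1 := by linarith [hx.2]
  have h4 : y ^ 4 ≤ 1 := pow_le_one₀ hy0 hy1
  rw [hxy]
  have key : ∀ X Z : ℝ, (1 - δ) * X ^ 2 - 1 / (4 * δ) * Z ^ 2 ≤ (X - y ^ 2 / 2 * Z) ^ 2 := by
    intro X Z
    have h1 : 0 ≤ (δ * X - y ^ 2 / 2 * Z) ^ 2 / δ := by positivity
    have h2 : (δ * X - y ^ 2 / 2 * Z) ^ 2 / δ = δ * X ^ 2 - y ^ 2 * X * Z + y ^ 4 / (4 * δ) * Z ^ 2 := by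
      field_simp; ring
    have h3 : y ^ 4 / (4 * δ) * Z ^ 2 ≤ 1 / (4 * δ) * Z ^ 2 := by gcongr
    nlinarith [sq_nonneg (y ^ 2 / 2 * Z)]
  have k1 := key (a + (-(s * (s + y)) + s ^ 2 / 2) * Q) Q
  have k2 := key (b - (-(s * (s + y)) + s ^ 2 / 2) * P) (-P)
  have e1 : a + -(s + y) ^ 2 / 2 * Q = a + (-(s * (s + y)) + s ^ 2 / 2) * Q - y ^ 2 / 2 * Q := by ring
  have e2 : b - -(s + y) ^ 2 / 2 * P = b - (-(s * (s + y)) + s ^ 2 / 2) * P - y ^ 2 / 2 * (-P) := by ring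
  rw [e1, e2]
  have k3 : 0 ≤ δ * ((c + 0 * Q) ^ 2) := by positivity
  have k4 : 0 ≤ δ * ((d - 0 * P) ^ 2) := by positivity
  linarith

lemma mag_scale (A : ℝ × ℝ → ℝ × ℝ) (l : ℝ) (v : ℝ × ℝ → ℂ) (hv : ContDiff ℝ 1 v) (x : ℝ × ℝ) :
    magGradSq A (fun y => (l : ℂ) * v y) x = l ^ 2 * magGradSq A v x := by
  have : fderiv ℝ (fun y => (l : ℂ) * v y) x = (l : ℂ) • fderiv ℝ v x :=
    fderiv_const_mul (hv.differentiable one_ne_zero x) _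
  rw [magGradSq_expand, magGradSq_expand, this]
  simp
  ring

lemma slab_scale (s l : ℝ) {v : ℝ × ℝ → ℂ} (hv : Slab s v) : Slab s (fun y => (l : ℂ) * v y) := by
  refine ⟨contDiff_const.mul hv.1, fun x hx => ⟨by simp [(hv.2 x hx).1], ?_⟩⟩
  rw [fderiv_const_mul (hv.1.differentiable one_ne_zero x), (hv.2 x hx).2]
  refine ContinuousLinearMap.ext fun e => ?_
  simp

lemma tile_main (κ K δ s : ℝ) (hκ : 0 < κ) (hK : 0 < K) (hδ : 0 < δ) (hδ1 : δ < 1) (hs : 0 < s)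
    (n : ℕ) (hn : 0 < n) (v : ℝ × ℝ → ℂ) (hv : Slab s v)
    (hb : ∀ x ∈ frontier (Strip n), v x = 0) :
    (K + 1 / (4 * δ)) ^ 2 / κ * n * (eD (s * ((1 - δ) / (K + 1 / (4 * δ)))) (n * √s) / (n * √s) ^ 2)
      ≤ ∫ x in Strip n, Td κ K v x := by
  have hnR : (0:ℝ) < n := by exact_mod_cast hn
  have hrr : √s ^ 2 = s := Real.sq_sqrt hs.le
  have hK' : 0 < K + 1 / (4 * δ) := by positivity
  set K' := K + 1 / (4 * δ) with hKdef
  set σ := (1 - δ) / K' with hσ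
  have hσ0 : 0 ≤ σ := div_nonneg (by linarith) hK'.le
  set l := √(κ / K') with hl
  have hl2 : l ^ 2 = κ / K' := Real.sq_sqrt (by positivity)
  have hst := stack s σ hs hσ0 n hn _ (slab_scale s l hv) (fun x hx => by simp [hb x hx])
  have hslab := slab_scale s l hv
  have hItg : IntegrableOn (dens (Alin s) σ (fun y => (l : ℂ) * v y)) (Strip n) :=
    integrableOn_slab n s (s+1) _ (continuous_dens (continuous_Alin s) σ hslab.1)
      (fun x hx => dens_zero _ _ _ _ (hslab.2 x hx))
  have h1 : K' ^ 2 / κ * ∫ x in Strip n, dens (Alin s) σ (fun y => (l : ℂ) * v y) x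
      ≤ ∫ x in Strip n, Td κ K v x := by
    rw [← integral_const_mul]
    apply setIntegral_mono_on (hItg.const_mul _) (Td_integrable κ K n s hv) (meas_strip _)
    intro x _
    by_cases hx : x.2 ∈ Ioo s (s+1)
    · have hm := mag_compare s δ hδ v x hx
      unfold dens Td
      rw [mag_scale _ _ _ hv.1, norm_mul, mul_pow, mul_pow]
      have hl' : ‖(l : ℂ)‖ ^ 2 = κ / K' := by
        rw [Complex.norm_real, Real.norm_eq_abs, sq_abs, hl2]
      have hl4 : ‖(l : ℂ)‖ ^ 4 = (κ / K') ^ 2 := by rw [← hl']; ring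
      rw [hl', hl4, hl2]
      have e : K' ^ 2 / κ * (σ * (κ / K' * magGradSq (Alin s) v x) - κ / K' * ‖v x‖ ^ 2
          + (κ / K') ^ 2 * ‖v x‖ ^ 4 / 2) = (1 - δ) * magGradSq (Alin s) v x - K' * ‖v x‖ ^ 2
          + κ / 2 * ‖v x‖ ^ 4 := by
        rw [hσ]; field_simp
      rw [e, hKdef]
      linarith
    · rw [dens_zero _ _ _ _ (hslab.2 x hx), Td, magGradSq_zero _ _ _ (hv.2 x hx), (hv.2 x hx).1]
      simp
  refine le_trans ?_ h1
  rw [mul_assoc]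
  apply mul_le_mul_of_nonneg_left _ (by positivity)
  rw [mul_pow, hrr, mul_div_assoc', div_le_iff₀ (by positivity)]
  calc (n:ℝ) * eD (s * σ) (n * √s) ≤ n * (s * n * ∫ x in Strip n, dens (Alin s) σ (fun y => (l : ℂ) * v y) x) := by
        gcongr
    _ = _ := by ring


lemma fub_one (R : ℝ) (φ : ℝ → ℝ) (hφ : Continuous φ) (h0 : ∀ y, y ∉ Ioo (0:ℝ) 1 → φ y = 0)
    (f : ℝ × ℝ → ℝ) (hf : IntegrableOn f (Strip R)) :
    Integrable (fun z : ℝ × (ℝ × ℝ) => φ (z.2.2 - z.1) * f z.2)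
      ((volume : Measure ℝ).prod (volume.restrict (Strip R))) ∧
    ∫ s, ∫ x in Strip R, φ (x.2 - s) * f x = (∫ y, φ y) * ∫ x in Strip R, f x := by
  have hφi : Integrable φ := by
    apply hφ.integrable_of_hasCompactSupport
    apply HasCompactSupport.intro (isCompact_Icc (a := (0:ℝ)) (b := 1))
    intro y hy
    exact h0 y (fun h => hy (Ioo_subset_Icc_self h))
  have hI : Integrable (fun z : ℝ × (ℝ × ℝ) => φ (z.2.2 - z.1) * f z.2)
      ((volume : Measure ℝ).prod (volume.restrict (Strip R))) := by
    have hm : AEStronglyMeasurable (fun z : ℝ × (ℝ × ℝ) => φ (z.2.2 - z.1) * f z.2)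
      ((volume : Measure ℝ).prod (volume.restrict (Strip R))) := by
      apply AEStronglyMeasurable.mul
      · apply Continuous.aestronglyMeasurable; fun_prop
      · exact hf.1.comp_snd
    rw [integrable_prod_iff' hm]
    constructor
    · filter_upwards with x
      exact (hφi.comp_sub_left x.2).mul_const _
    · have : ∀ x : ℝ × ℝ, ∫ s, ‖φ (x.2 - s) * f x‖ = (∫ y, ‖φ y‖) * ‖f x‖ := by
        intro x
        simp_rw [norm_mul]
        rw [integral_mul_const, integral_sub_left_eq_self (fun y => ‖φ y‖) volume x.2]
      simp_rw [this]
      exact hf.norm.const_mul _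
  refine ⟨hI, ?_⟩
  rw [integral_integral_swap hI, ← integral_const_mul]
  congr 1
  ext x
  rw [integral_mul_const, integral_sub_left_eq_self φ volume x.2]

lemma Td_loc_expand {χ : ℝ → ℝ} (h : IsCut χ) (κ K s : ℝ) {u : ℝ × ℝ → ℂ} (hu : ContDiff ℝ 1 u) (x : ℝ × ℝ) :
    Td κ K (loc χ s u) x = χ (x.2 - s) ^ 2 * (magGradSq Avan u x - K * ‖u x‖ ^ 2)
      + (2 * χ (x.2 - s) * deriv χ (x.2 - s)) *
        ((fderiv ℝ u x (0, 1)).re * (u x).re + (fderiv ℝ u x (0, 1)).im * (u x).im)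
      + (deriv χ (x.2 - s)) ^ 2 * ‖u x‖ ^ 2 + χ (x.2 - s) ^ 4 * (κ / 2 * ‖u x‖ ^ 4) := by
  have h2 : ‖loc χ s u x‖ ^ 2 = χ (x.2 - s) ^ 2 * ‖u x‖ ^ 2 := by
    rw [loc, norm_mul, mul_pow, Complex.norm_real, Real.norm_eq_abs, sq_abs]
  have h4 : ‖loc χ s u x‖ ^ 4 = χ (x.2 - s) ^ 4 * ‖u x‖ ^ 4 := by
    have : ‖loc χ s u x‖ ^ 4 = (‖loc χ s u x‖ ^ 2) ^ 2 := by ring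
    rw [this, h2]; ring
  unfold Td
  rw [h2, h4, magGradSq_expand, magGradSq_expand, loc_fderiv h s hu, loc_fderiv h s hu, nsq (u x)]
  simp [Avan, loc]
  ring

lemma localization {χ : ℝ → ℝ} (h : IsCut χ) (L R K : ℝ) (hL : 0 < L) (u : ℝ × ℝ → ℂ) (hu : MemH1mag0 R u)
    (hc : ∫ y, (deriv χ y) ^ 2 ≤ (K - L ^ (-(2:ℝ)/3)) * ∫ y, χ y ^ 2) :
    Integrable (Tl χ (L ^ (-(2:ℝ)/3)) K R u) ∧
    ∫ s, Tl χ (L ^ (-(2:ℝ)/3)) K R u s ≤ (∫ y, χ y ^ 2) * Estrip L R u := by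
  obtain ⟨hu1, iN, iP, iN4, hub⟩ := hu
  set κ := L ^ (-(2:ℝ)/3) with hκ
  have hκ0 : 0 < κ := Real.rpow_pos_of_pos hL _
  have hχc := h.smooth.continuous
  have hχ' : Continuous (deriv χ) := h.smooth.continuous_deriv_one
  have huc := hu1.continuous
  have hu1' : Continuous (fderiv ℝ u) := hu1.continuous_fderiv one_ne_zero
  set Q : ℝ × ℝ → ℝ := fun x => (fderiv ℝ u x (0, 1)).re * (u x).re + (fderiv ℝ u x (0, 1)).im * (u x).im with hQ
  have iQ : IntegrableOn Q (Strip R) := by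
    refine Integrable.mono' (iP.add iN) ?_ ?_
    · apply Continuous.aestronglyMeasurable
      simp only [hQ]
      exact ((Complex.continuous_re.comp (by fun_prop)).mul (Complex.continuous_re.comp huc)).add
        ((Complex.continuous_im.comp (by fun_prop)).mul (Complex.continuous_im.comp huc))
    · filter_upwards with x
      simp only [Pi.add_apply, hQ, Real.norm_eq_abs]
      rw [magGradSq_expand, nsq]
      simp only [Avan]
      generalize (fderiv ℝ u x (1, 0)).re = a
      generalize (fderiv ℝ u x (1, 0)).im = b
      generalize (fderiv ℝ u x (0, 1)).re = c
      generalize (fderiv ℝ u x (0, 1)).im = d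
      generalize (u x).re = P
      generalize (u x).im = Z
      generalize -x.2 ^ 2 / 2 = A
      rw [abs_le]
      constructor
      · nlinarith [sq_nonneg (a + A * Z), sq_nonneg (b - A * P), sq_nonneg (c + P), sq_nonneg (d + Z), sq_nonneg P, sq_nonneg Z, sq_nonneg c, sq_nonneg d]
      · nlinarith [sq_nonneg (a + A * Z), sq_nonneg (b - A * P), sq_nonneg (c - P), sq_nonneg (d - Z), sq_nonneg P, sq_nonneg Z, sq_nonneg c, sq_nonneg d]
  have iPK : IntegrableOn (fun x => magGradSq Avan u x - K * ‖u x‖ ^ 2) (Strip R) := iP.sub (iN.const_mul K)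
  obtain ⟨J1, E1⟩ := fub_one R (fun y => χ y ^ 2) (by fun_prop) (fun y hy => by simp [h.supp y hy]) _ iPK
  obtain ⟨J2, E2⟩ := fub_one R (fun y => 2 * χ y * deriv χ y) (by fun_prop) (fun y hy => by simp [h.supp y hy]) _ iQ
  obtain ⟨J3, E3⟩ := fub_one R (fun y => (deriv χ y) ^ 2) (by fun_prop) (fun y hy => by simp [h.deriv_zero y hy]) _ iN
  obtain ⟨J4, E4⟩ := fub_one R (fun y => χ y ^ 4) (by fun_prop) (fun y hy => by simp [h.supp y hy]) _ (iN4.const_mul (κ / 2))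
  have J12 := J1.add J2
  have J123 := J12.add J3
  have J := J123.add J4
  have hTl : ∀ s, Tl χ κ K R u s = ∫ x in Strip R, (χ (x.2 - s) ^ 2 * (magGradSq Avan u x - K * ‖u x‖ ^ 2)
      + (2 * χ (x.2 - s) * deriv χ (x.2 - s)) * Q x
      + (deriv χ (x.2 - s)) ^ 2 * ‖u x‖ ^ 2 + χ (x.2 - s) ^ 4 * (κ / 2 * ‖u x‖ ^ 4)) := by
    intro s
    unfold Tl
    congr 1
    ext x
    exact Td_loc_expand h κ K s hu1 x
  have hTfun : Tl χ κ K R u = fun s => ∫ x in Strip R, (χ (x.2 - s) ^ 2 * (magGradSq Avan u x - K * ‖u x‖ ^ 2)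
      + (2 * χ (x.2 - s) * deriv χ (x.2 - s)) * Q x
      + (deriv χ (x.2 - s)) ^ 2 * ‖u x‖ ^ 2 + χ (x.2 - s) ^ 4 * (κ / 2 * ‖u x‖ ^ 4)) := funext hTl
  refine ⟨?_, ?_⟩
  · rw [hTfun]
    exact J.integral_prod_left
  · have tot : ∫ s, Tl χ κ K R u s = (∫ y, χ y ^ 2) * (∫ x in Strip R, (magGradSq Avan u x - K * ‖u x‖ ^ 2))
        + (∫ y, 2 * χ y * deriv χ y) * (∫ x in Strip R, Q x)
        + (∫ y, (deriv χ y) ^ 2) * (∫ x in Strip R, ‖u x‖ ^ 2)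
        + (∫ y, χ y ^ 4) * (∫ x in Strip R, κ / 2 * ‖u x‖ ^ 4) := by
      rw [← E1, ← E2, ← E3, ← E4, hTfun]
      have a1 := integral_integral_add J123 J4
      have a2 := integral_integral_add J12 J3
      have a3 := integral_integral_add J1 J2
      simp only [Pi.add_apply] at a1 a2 a3
      rw [a1, a2, a3]
    have z2 : ∫ y, 2 * χ y * deriv χ y = 0 := by
      have hcs : ∀ φ : ℝ → ℝ, Continuous φ → (∀ y, y ∉ Ioo (0:ℝ) 1 → φ y = 0) → Integrable φ := by
        intro φ hφ h0
        apply hφ.integrable_of_hasCompactSupport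
        apply HasCompactSupport.intro (isCompact_Icc (a := (0:ℝ)) (b := 1))
        intro y hy
        exact h0 y (fun h => hy (Ioo_subset_Icc_self h))
      apply integral_eq_zero_of_hasDerivAt_of_integrable (f := fun y => χ y ^ 2)
      · intro y
        have := (h.smooth.differentiable one_ne_zero y).hasDerivAt.pow 2
        exact this.congr_deriv (by norm_num)
      · exact hcs _ (by fun_prop) (fun y hy => by simp [h.supp y hy])
      · exact hcs _ (by fun_prop) (fun y hy => by simp [h.supp y hy])
    have m4 : ∫ y, χ y ^ 4 ≤ ∫ y, χ y ^ 2 := by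
      have hcs : ∀ φ : ℝ → ℝ, Continuous φ → (∀ y, y ∉ Ioo (0:ℝ) 1 → φ y = 0) → Integrable φ := by
        intro φ hφ h0
        apply hφ.integrable_of_hasCompactSupport
        apply HasCompactSupport.intro (isCompact_Icc (a := (0:ℝ)) (b := 1))
        intro y hy
        exact h0 y (fun h => hy (Ioo_subset_Icc_self h))
      apply integral_mono
      · exact hcs _ (by fun_prop) (fun y hy => by simp [h.supp y hy])
      · exact hcs _ (by fun_prop) (fun y hy => by simp [h.supp y hy])
      · intro y
        exact pow_le_pow_of_le_one (h.nonneg y) (h.le_one y) (by norm_num)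
    have hE : Estrip L R u = (∫ x in Strip R, magGradSq Avan u x) - κ * (∫ x in Strip R, ‖u x‖ ^ 2)
        + ∫ x in Strip R, κ / 2 * ‖u x‖ ^ 4 := by
      unfold Estrip stripDensity
      rw [← hκ]
      have k1 : IntegrableOn (fun x => magGradSq Avan u x - κ * ‖u x‖ ^ 2) (Strip R) := iP.sub (iN.const_mul κ)
      rw [integral_add k1 (iN4.const_mul (κ/2)), integral_sub iP (iN.const_mul κ), integral_const_mul κ]
    have n2 : 0 ≤ ∫ x in Strip R, ‖u x‖ ^ 2 := integral_nonneg (fun x => by positivity)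
    have n4 : 0 ≤ ∫ x in Strip R, κ / 2 * ‖u x‖ ^ 4 := integral_nonneg (fun x => by positivity)
    rw [tot, z2, hE, integral_sub iP (iN.const_mul K), integral_const_mul K]
    have b1 := mul_le_mul_of_nonneg_right hc n2
    have b2 := mul_le_mul_of_nonneg_right m4 n4
    nlinarith

def refl2 (x : ℝ × ℝ) : ℝ × ℝ := (x.1, -x.2)

lemma strip_reflect (R : ℝ) (G : ℝ × ℝ → ℝ) :
    ∫ x in Strip R, G (refl2 x) = ∫ x in Strip R, G x := by
  rw [← integral_indicator (meas_strip R), ← integral_indicator (meas_strip R)]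
  have mp : MeasurePreserving (MeasurableEquiv.prodCongr (MeasurableEquiv.refl ℝ) (MeasurableEquiv.neg ℝ))
      (volume : Measure (ℝ × ℝ)) volume := by
    rw [Measure.volume_eq_prod]
    exact (MeasurePreserving.id volume).prod (Measure.measurePreserving_neg volume)
  have := mp.integral_comp' ((Strip R).indicator G)
  rw [← this]
  congr 1

lemma refl_fderiv {v : ℝ × ℝ → ℂ} (hv : ContDiff ℝ 1 v) (x e : ℝ × ℝ) :
    fderiv ℝ (fun y => v (refl2 y)) x e = fderiv ℝ v (refl2 x) (refl2 e) := by
  have l : HasFDerivAt refl2 ((ContinuousLinearMap.fst ℝ ℝ ℝ).prod (-ContinuousLinearMap.snd ℝ ℝ ℝ)) x := by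
    unfold refl2
    exact (hasFDerivAt_fst (𝕜 := ℝ) (p := x)).prodMk (hasFDerivAt_snd (𝕜 := ℝ) (p := x)).neg
  have := ((hv.differentiable one_ne_zero (refl2 x)).hasFDerivAt).comp x l
  have e1 : HasFDerivAt (fun y => v (refl2 y)) _ x := this
  rw [e1.fderiv]
  rfl

lemma refl_contDiff {v : ℝ × ℝ → ℂ} (hv : ContDiff ℝ 1 v) : ContDiff ℝ 1 (fun y => v (refl2 y)) := by
  have : ContDiff ℝ 1 refl2 := by unfold refl2; fun_prop
  exact hv.comp this

lemma Tl_reflect {χ : ℝ → ℝ} (h : IsCut χ) (κ K R s : ℝ) {u : ℝ × ℝ → ℂ} (hu : ContDiff ℝ 1 u) :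
    Tl χ κ K R (fun y => u (refl2 y)) (-1 - s) = Tl χ κ K R u s := by
  unfold Tl
  rw [← strip_reflect]
  congr 1
  ext x
  have e : ∀ y, loc χ (-1 - s) (fun y => u (refl2 y)) (y) = loc χ s u (refl2 y) := by
    intro y
    unfold loc refl2
    rw [← h.symm (-y.2 - s)]
    congr 3
    ring
  have e' : loc χ (-1 - s) (fun y => u (refl2 y)) = fun y => loc χ s u (refl2 y) := funext e
  rw [e']
  have hv := loc_contDiff h s hu
  generalize loc χ s u = v at hv
  have hrr : refl2 (refl2 x) = x := by simp [refl2]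
  unfold Td
  rw [magGradSq_expand, magGradSq_expand, refl_fderiv hv, refl_fderiv hv, hrr]
  have r1 : refl2 (1, 0) = (1, 0) := by simp [refl2]
  have r2 : refl2 (0, 1) = -(0, 1) := by simp [refl2]
  rw [r1, r2, map_neg]
  simp [Avan, refl2]


lemma smoothTransition_deriv_bdd : ∃ D > 0, ∀ x, |deriv Real.smoothTransition x| ≤ D := by
  have hc : Continuous (deriv Real.smoothTransition) :=
    (Real.smoothTransition.contDiff (n := 1)).continuous_deriv (by norm_num)
  obtain ⟨D, hD⟩ := (isCompact_Icc (a := (0:ℝ)) (b := 1)).exists_bound_of_continuousOn hc.continuousOn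
  refine ⟨|D| + 1, by positivity, fun x => ?_⟩
  by_cases hx : x ∈ Icc (0:ℝ) 1
  · have := hD x hx
    rw [Real.norm_eq_abs] at this
    linarith [le_abs_self D]
  · have h0 : deriv Real.smoothTransition x = 0 := by
      by_cases h1 : x ≤ 0
      · apply IsLocalMin.deriv_eq_zero
        filter_upwards with z
        rw [Real.smoothTransition.zero_of_nonpos h1]; exact Real.smoothTransition.nonneg z
      · have h2 : 1 ≤ x := by
          by_contra h2
          exact hx ⟨by linarith, by linarith⟩
        apply IsLocalMax.deriv_eq_zero
        filter_upwards with z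
        rw [Real.smoothTransition.one_of_one_le h2]; exact Real.smoothTransition.le_one z
    rw [h0, abs_zero]; positivity

lemma exists_cut : ∃ C₀ > (0:ℝ), ∀ q : ℝ, 0 < q → q ≤ 1/4 → ∃ χ, IsCut χ ∧
    1 - 2 * q ≤ ∫ y, χ y ^ 2 ∧ ∫ y, χ y ^ 2 ≤ 1 ∧ ∫ y, (deriv χ y) ^ 2 ≤ C₀ / q := by
  obtain ⟨D, hD0, hD⟩ := smoothTransition_deriv_bdd
  refine ⟨8 * D ^ 2, by positivity, fun q hq hq4 => ?_⟩
  set S := Real.smoothTransition with hS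
  have hSs : ContDiff ℝ 1 S := Real.smoothTransition.contDiff (n := 1)
  let χ : ℝ → ℝ := fun y => S (y / q) * S ((1 - y) / q)
  have hχ : IsCut χ := by
    refine ⟨?_, ?_, ?_, ?_, ?_⟩
    · apply ContDiff.mul
      · exact hSs.comp (by fun_prop)
      · exact hSs.comp (by fun_prop)
    · intro y; exact mul_nonneg (Real.smoothTransition.nonneg _) (Real.smoothTransition.nonneg _)
    · intro y; exact mul_le_one₀ (Real.smoothTransition.le_one _) (Real.smoothTransition.nonneg _) (Real.smoothTransition.le_one _)
    · intro y hy
      by_cases h1 : y ≤ 0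
      · have : S (y / q) = 0 := Real.smoothTransition.zero_of_nonpos (div_nonpos_of_nonpos_of_nonneg h1 hq.le)
        simp [χ, this]
      · have h2 : 1 ≤ y := by
          by_contra h2; exact hy ⟨by linarith, by linarith⟩
        have : S ((1 - y) / q) = 0 := Real.smoothTransition.zero_of_nonpos (div_nonpos_of_nonpos_of_nonneg (by linarith) hq.le)
        simp [χ, this]
    · intro y
      simp only [χ]
      rw [sub_sub_cancel, mul_comm]
  have hone : ∀ y ∈ Icc q (1 - q), χ y = 1 := by
    intro y hy
    have a1 : S (y / q) = 1 := Real.smoothTransition.one_of_one_le (by rw [le_div_iff₀ hq]; linarith [hy.1])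
    have a2 : S ((1 - y) / q) = 1 := Real.smoothTransition.one_of_one_le (by rw [le_div_iff₀ hq]; linarith [hy.2])
    simp [χ, a1, a2]
  have hcont : Continuous χ := hχ.smooth.continuous
  have hdc : Continuous (deriv χ) := hχ.smooth.continuous_deriv (by norm_num)
  have hderiv : ∀ y, |deriv χ y| ≤ 2 * D / q := by
    intro y
    have hSd : ∀ z, HasDerivAt S (deriv S z) z := fun z => (hSs.differentiable (by norm_num) z).hasDerivAt
    have e1 : HasDerivAt (fun y => S (y / q)) (deriv S (y / q) * (1 / q)) y :=
      HasDerivAt.comp (h₂ := S) (h := fun y => y / q) y (hSd (y/q)) ((hasDerivAt_id y).div_const q)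
    have e2 : HasDerivAt (fun y => S ((1 - y) / q)) (deriv S ((1 - y) / q) * (-1 / q)) y :=
      HasDerivAt.comp (h₂ := S) (h := fun y => (1 - y) / q) y (hSd ((1-y)/q)) (((hasDerivAt_id y).const_sub 1).div_const q)
    have e3 : deriv χ y = _ := (e1.mul e2).deriv
    rw [e3]
    have b1 := hD (y/q)
    have b2 := hD ((1-y)/q)
    have c1 : |S (y/q)| ≤ 1 := by rw [abs_of_nonneg (Real.smoothTransition.nonneg _)]; exact Real.smoothTransition.le_one _
    have c2 : |S ((1-y)/q)| ≤ 1 := by rw [abs_of_nonneg (Real.smoothTransition.nonneg _)]; exact Real.smoothTransition.le_one _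
    calc _ ≤ |deriv S (y / q) * (1 / q) * S ((1 - y) / q)| + |S (y / q) * (deriv S ((1 - y) / q) * (-1 / q))| := abs_add_le _ _
      _ = |deriv S (y / q)| * (1/q) * |S ((1 - y) / q)| + |S (y / q)| * (|deriv S ((1 - y) / q)| * (1 / q)) := by
          simp only [abs_mul, abs_div, abs_neg, abs_one, abs_of_pos hq]
      _ ≤ D * (1/q) * 1 + 1 * (D * (1/q)) := by gcongr
      _ = _ := by ring
  have supp_int : ∀ f : ℝ → ℝ, (∀ y, y ∉ Ioo (0:ℝ) 1 → f y = 0) → ∫ y, f y = ∫ y in (0:ℝ)..1, f y := by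
    intro f hf
    rw [intervalIntegral.integral_of_le zero_le_one]
    symm
    apply setIntegral_eq_integral_of_forall_compl_eq_zero
    intro y hy
    exact hf y (fun h => hy ⟨h.1, h.2.le⟩)
  have ii : ∀ f : ℝ → ℝ, Continuous f → ∀ a b : ℝ, IntervalIntegrable f volume a b := fun f hf a b => hf.intervalIntegrable a b
  have c2 : Continuous (fun y => χ y ^ 2) := by fun_prop
  have d2 : Continuous (fun y => deriv χ y ^ 2) := by fun_prop
  refine ⟨χ, hχ, ?_, ?_, ?_⟩
  · rw [supp_int _ (fun y hy => by simp [hχ.supp y hy])]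
    rw [← intervalIntegral.integral_add_adjacent_intervals (ii _ c2 0 q) (ii _ c2 q 1),
      ← intervalIntegral.integral_add_adjacent_intervals (ii _ c2 q (1-q)) (ii _ c2 (1-q) 1)]
    have p1 : 0 ≤ ∫ y in (0:ℝ)..q, χ y ^ 2 := intervalIntegral.integral_nonneg hq.le (fun y _ => by positivity)
    have p2 : 0 ≤ ∫ y in (1-q)..1, χ y ^ 2 := intervalIntegral.integral_nonneg (by linarith) (fun y _ => by positivity)
    have p3 : ∫ y in q..(1-q), χ y ^ 2 = ∫ y in q..(1-q), (1:ℝ) := by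
      apply intervalIntegral.integral_congr
      intro y hy
      rw [uIcc_of_le (by linarith)] at hy
      simp [hone y hy]
    rw [p3, intervalIntegral.integral_const, smul_eq_mul]
    linarith
  · rw [supp_int _ (fun y hy => by simp [hχ.supp y hy])]
    have := intervalIntegral.integral_mono_on zero_le_one (ii _ c2 0 1) (ii (fun _ => (1:ℝ)) (by fun_prop) 0 1)
      (fun y _ => pow_le_one₀ (hχ.nonneg y) (hχ.le_one y))
    simpa using this
  · rw [supp_int _ (fun y hy => by simp [hχ.deriv_zero y hy])]
    rw [← intervalIntegral.integral_add_adjacent_intervals (ii _ d2 0 q) (ii _ d2 q 1),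
      ← intervalIntegral.integral_add_adjacent_intervals (ii _ d2 q (1-q)) (ii _ d2 (1-q) 1)]
    have hb : ∀ y, deriv χ y ^ 2 ≤ (2 * D / q) ^ 2 := fun y => sq_le_sq' (by linarith [neg_abs_le (deriv χ y), hderiv y]) (by linarith [le_abs_self (deriv χ y), hderiv y])
    have p1 := intervalIntegral.integral_mono_on hq.le (ii _ d2 0 q) (ii (fun _ => (2 * D / q) ^ 2) (by fun_prop) 0 q)
      (fun y _ => hb y)
    have p2 := intervalIntegral.integral_mono_on (show 1 - q ≤ 1 by linarith) (ii _ d2 (1-q) 1) (ii (fun _ => (2 * D / q) ^ 2) (by fun_prop) (1-q) 1)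
      (fun y _ => hb y)
    have p3 : ∫ y in q..(1-q), deriv χ y ^ 2 = ∫ y in q..(1-q), (0:ℝ) := by
      apply intervalIntegral.integral_congr
      intro y hy
      rw [uIcc_of_le (by linarith)] at hy
      have : deriv χ y = 0 := by
        apply IsLocalMax.deriv_eq_zero
        filter_upwards with z
        rw [hone y hy]; exact hχ.le_one z
      simp [this]
    rw [intervalIntegral.integral_const, smul_eq_mul] at p1 p2
    rw [p3, intervalIntegral.integral_zero]
    have : (q - 0) * (2 * D / q) ^ 2 + (1 - (1 - q)) * (2 * D / q) ^ 2 = 8 * D ^ 2 / q := by field_simp; ring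
    linarith


lemma side_limit (g : ℝ → ℝ) (hg : IsLimitG g) (Λ σ : ℝ) (hΛ : 0 < Λ) (hσ : 0 < σ) (τ : ℕ → ℝ → ℝ)
    (hItg : ∀ n : ℕ, 0 < n → IntegrableOn (τ n) (Ioc 0 (1/σ)))
    (hlow : ∀ n : ℕ, 0 < n → ∀ s > 0, Λ * (eD (s * σ) (n * √s) / (n * √s) ^ 2) ≤ τ n s)
    (e : ℝ) (he : 0 < e) :
    ∀ᶠ n : ℕ in atTop, Λ * (1/σ * ∫ b in (0:ℝ)..1, g b) - e ≤ ∫ s in Ioc 0 (1/σ), τ n s := by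
  have hs0 : 0 < 1/σ := by positivity
  set μ := volume.restrict (Ioc 0 (1/σ)) with hμ
  have hae : ∀ᵐ s ∂μ, s ∈ Ioc 0 (1/σ) := ae_restrict_mem measurableSet_Ioc
  have hgm : AEStronglyMeasurable (fun s => g (s * σ)) μ := by
    apply AEMeasurable.aestronglyMeasurable
    apply aemeasurable_restrict_of_monotoneOn measurableSet_Ioc
    intro a ha b hb hab
    exact g_mono g hg (mul_pos ha.1 hσ) (mul_pos hb.1 hσ) (mul_le_mul_of_nonneg_right hab hσ.le)
  have hfin : IsFiniteMeasure μ := by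
    constructor; simp [hμ]
  have hgi : Integrable (fun s => g (s * σ)) μ := by
    apply Integrable.of_bound hgm (1/2)
    filter_upwards [hae] with s hs
    have := g_bounds g hg (s * σ) (mul_pos hs.1 hσ)
    rw [Real.norm_eq_abs, abs_le]; constructor <;> linarith
  let f : ℕ → ℝ → ℝ := fun n s => min (τ n s / Λ) (g (s * σ))
  have hfi : ∀ n : ℕ, 0 < n → Integrable (f n) μ := fun n hn => (Integrable.div_const (hItg n hn) Λ).inf hgi
  have hlim : Tendsto (fun n => ∫ s, f n s ∂μ) atTop (𝓝 (∫ s, g (s * σ) ∂μ)) := by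
    apply tendsto_integral_filter_of_dominated_convergence (fun _ => 1/2)
    · filter_upwards [eventually_gt_atTop 0] with n hn using (hfi n hn).aestronglyMeasurable
    · filter_upwards [eventually_gt_atTop 0] with n hn
      filter_upwards [hae] with s hs
      have h1 := hlow n hn s hs.1
      have hr : (0:ℝ) < n * √s := mul_pos (by exact_mod_cast hn) (Real.sqrt_pos.2 hs.1)
      have h2 := h_bounds (s * σ) (n * √s) (mul_pos hs.1 hσ).le hr
      have h3 := g_bounds g hg (s * σ) (mul_pos hs.1 hσ)
      have h4 : eD (s * σ) (n * √s) / (n * √s) ^ 2 ≤ τ n s / Λ := by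
        rw [le_div_iff₀ hΛ]; linarith
      have h5 : -(1/2) ≤ f n s := le_min (by linarith [h2.1]) h3.1
      have h6 : f n s ≤ g (s * σ) := min_le_right _ _
      rw [Real.norm_eq_abs, abs_le]; constructor <;> linarith [h3.2]
    · exact integrable_const _
    · filter_upwards [hae] with s hs
      have hh : Tendsto (fun n : ℕ => eD (s * σ) (n * √s) / (n * √s) ^ 2) atTop (𝓝 (g (s * σ))) := by
        have hr : Tendsto (fun n : ℕ => (n:ℝ) * √s) atTop atTop :=
          tendsto_natCast_atTop_atTop.atTop_mul_const (Real.sqrt_pos.2 hs.1)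
        exact (hg (s * σ) (mul_pos hs.1 hσ)).comp hr
      have hh2 := hh.min (tendsto_const_nhds (x := g (s * σ)))
      rw [min_self] at hh2
      apply tendsto_of_tendsto_of_tendsto_of_le_of_le' hh2 tendsto_const_nhds
      · filter_upwards [eventually_gt_atTop 0] with n hn
        apply min_le_min_right
        rw [le_div_iff₀ hΛ]; linarith [hlow n hn s hs.1]
      · filter_upwards with n using min_le_right _ _
  have hval : ∫ s, g (s * σ) ∂μ = 1/σ * ∫ b in (0:ℝ)..1, g b := by
    rw [hμ, ← intervalIntegral.integral_of_le hs0.le, intervalIntegral.integral_comp_mul_right _ hσ.ne']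
    rw [zero_mul, one_div, inv_mul_cancel₀ hσ.ne', smul_eq_mul]
  rw [hval] at hlim
  have hev := hlim.eventually (lt_mem_nhds (show 1/σ * (∫ b in (0:ℝ)..1, g b) - e/Λ < _ by
    have : 0 < e/Λ := by positivity
    linarith))
  filter_upwards [hev, eventually_gt_atTop 0] with n h1 hn
  have h2 : ∫ s, f n s ∂μ ≤ ∫ s, τ n s / Λ ∂μ :=
    integral_mono (hfi n hn) (Integrable.div_const (hItg n hn) Λ) (fun s => min_le_left _ _)
  rw [integral_div] at h2
  have h3 := h1.le.trans h2
  rw [le_div_iff₀ hΛ] at h3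
  have : (1/σ * (∫ b in (0:ℝ)..1, g b) - e/Λ) * Λ = Λ * (1/σ * ∫ b in (0:ℝ)..1, g b) - e := by
    field_simp
  linarith


lemma near_min (L : ℝ) (n : ℕ) :
    ∃ u, MemH1mag0 n u ∧ Estrip L n u < egs L n + 1 := by
  have hne : (Estrip L n '' {u | MemH1mag0 n u}).Nonempty := by
    refine ⟨_, (fun _ => 0), ?_, rfl⟩
    refine ⟨contDiff_const, ?_, ?_, ?_, fun _ _ => rfl⟩
    · simp
    · have : magGradSq Avan (fun _ => (0:ℂ)) = fun _ => 0 := by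
        ext x; simp [magGradSq]
      rw [this]; exact integrableOn_zero
    · simp
  obtain ⟨_, ⟨u, hu, rfl⟩, h⟩ := Real.lt_sInf_add_pos hne one_pos
  exact ⟨u, hu, h⟩

lemma loc_frontier {χ : ℝ → ℝ} (s R : ℝ) {u : ℝ × ℝ → ℂ} (hb : ∀ x ∈ frontier (Strip R), u x = 0) :
    ∀ x ∈ frontier (Strip R), loc χ s u x = 0 := by
  intro x hx; simp [loc, hb x hx]

lemma Tl_trunc {χ : ℝ → ℝ} (h : IsCut χ) (κ K R s0 : ℝ) (hκ : 0 < κ) (hR : 0 < R) (hs0 : 0 < s0) (hK : K ≤ s0)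
    {u : ℝ × ℝ → ℂ} (hu : ContDiff ℝ 1 u) (hb : ∀ x ∈ frontier (Strip R), u x = 0)
    (hi : Integrable (Tl χ κ K R u)) :
    ∫ s in Ioc 0 s0, Tl χ κ K R u s ≤ ∫ s in Ioi 0, Tl χ κ K R u s := by
  rw [← Ioc_union_Ioi_eq_Ioi hs0.le,
    setIntegral_union (Ioc_disjoint_Ioi le_rfl) measurableSet_Ioi hi.integrableOn hi.integrableOn]
  have : 0 ≤ ∫ s in Ioi s0, Tl χ κ K R u s := by
    apply setIntegral_nonneg measurableSet_Ioi
    intro s hs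
    exact tile_outer κ K R s hκ.le hR (hK.trans (le_of_lt hs)) _ (loc_slab h s hu) (loc_frontier s R hb)
  linarith

lemma total_split {χ : ℝ → ℝ} (h : IsCut χ) (κ K R s0 : ℝ) (hκ : 0 < κ) (hR : 0 < R) (hs0 : 0 < s0) (hK : K ≤ s0)
    {u : ℝ × ℝ → ℂ} (hu : ContDiff ℝ 1 u) (hb : ∀ x ∈ frontier (Strip R), u x = 0)
    (hi : Integrable (Tl χ κ K R u)) :
    Integrable (Tl χ κ K R (fun y => u (refl2 y))) ∧
    (∫ s in Ioc 0 s0, Tl χ κ K R (fun y => u (refl2 y)) s) + (∫ s in Ioc 0 s0, Tl χ κ K R u s)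
      - K ^ 2 / (2 * κ) * R ≤ ∫ s, Tl χ κ K R u s := by
  have hr : Tl χ κ K R (fun y => u (refl2 y)) = fun s => Tl χ κ K R u (-1 - s) := by
    ext s
    rw [← Tl_reflect h κ K R (-1 - s) hu, sub_sub_cancel]
  have hb' : ∀ x ∈ frontier (Strip R), u (refl2 x) = 0 := by
    intro x hx
    apply hb
    rw [frontier_strip R hR] at hx ⊢
    exact ⟨hx.1, mem_univ _⟩
  have hi' : Integrable (Tl χ κ K R (fun y => u (refl2 y))) := by
    rw [hr]; exact hi.comp_sub_left (-1)
  refine ⟨hi', ?_⟩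
  have t1 := Tl_trunc h κ K R s0 hκ hR hs0 hK hu hb hi
  have t2 := Tl_trunc h κ K R s0 hκ hR hs0 hK (refl_contDiff hu) hb' hi'
  have mid : -(K ^ 2 / (2 * κ)) * R ≤ ∫ s in Ioc (-1:ℝ) 0, Tl χ κ K R u s := by
    have := setIntegral_mono_on (μ := volume) (s := Ioc (-1:ℝ) 0) (f := fun _ => -(K ^ 2 / (2 * κ)) * R)
      (g := Tl χ κ K R u) (integrableOn_const (by simp)) hi.integrableOn measurableSet_Ioc
      (fun s _ => tile_trivial κ K R s hκ hR _ (loc_slab h s hu))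
    simpa using this
  have left : ∫ s in Ioi 0, Tl χ κ K R (fun y => u (refl2 y)) s = ∫ s in Iic (-1), Tl χ κ K R u s := by
    rw [hr, ← integral_Ici_eq_integral_Ioi, ← integral_indicator measurableSet_Ici, ← integral_indicator measurableSet_Iic,
      ← integral_sub_left_eq_self (indicator (Iic (-1)) _) volume (-1)]
    congr 1
    ext s
    by_cases hs : 0 ≤ s
    · rw [indicator_of_mem (by exact hs), indicator_of_mem (by simp only [mem_Iic]; linarith)]
    · rw [indicator_of_notMem (by exact hs), indicator_of_notMem (by simp only [mem_Iic]; linarith)]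
  have tot : ∫ s, Tl χ κ K R u s = (∫ s in Iic (-1), Tl χ κ K R u s) + (∫ s in Ioc (-1:ℝ) 0, Tl χ κ K R u s)
      + ∫ s in Ioi 0, Tl χ κ K R u s := by
    rw [← intervalIntegral.integral_Iic_add_Ioi (b := -1) hi.integrableOn hi.integrableOn,
      ← Ioc_union_Ioi_eq_Ioi (show (-1:ℝ) ≤ 0 by norm_num),
      setIntegral_union (Ioc_disjoint_Ioi le_rfl) measurableSet_Ioi hi.integrableOn hi.integrableOn]
    ring
  linarith

lemma fixed_L (g E : ℝ → ℝ) (hg : IsLimitG g) (hE : IsLimitE E) {χ : ℝ → ℝ} (h : IsCut χ) (L K δ : ℝ)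
    (hL : 0 < L) (hK : 0 < K) (hδ : 0 < δ) (hδ1 : δ < 1)
    (hc : ∫ y, (deriv χ y) ^ 2 ≤ (K - L ^ (-(2:ℝ)/3)) * ∫ y, χ y ^ 2) :
    2 * ((K + 1 / (4 * δ)) ^ 2 / L ^ (-(2:ℝ)/3) * (1 / ((1 - δ) / (K + 1 / (4 * δ))) * ∫ b in (0:ℝ)..1, g b))
      - K ^ 2 / (2 * L ^ (-(2:ℝ)/3)) ≤ (∫ y, χ y ^ 2) * E L := by
  have hκ : 0 < L ^ (-(2:ℝ)/3) := Real.rpow_pos_of_pos hL _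
  choose u hu hlt using near_min L
  have hloc := fun n : ℕ => localization h L n K hL (u n) (hu n) hc
  set κ := L ^ (-(2:ℝ)/3) with hκd
  set m := ∫ y, χ y ^ 2 with hm
  have hm0 : 0 ≤ m := integral_nonneg (fun y => by positivity)
  have hK' : 0 < K + 1 / (4 * δ) := by positivity
  have hKK : K ≤ K + 1 / (4 * δ) := by
    have : 0 < 1 / (4 * δ) := by positivity
    linarith
  set K' := K + 1 / (4 * δ) with hKdef
  set σ := (1 - δ) / K' with hσd
  set Λ := K' ^ 2 / κ with hΛd
  have hσ : 0 < σ := div_pos (by linarith) hK'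
  have hΛ : 0 < Λ := by positivity
  have hs0 : 0 < 1 / σ := by positivity
  have hKs : K ≤ 1 / σ := by
    rw [hσd, one_div_div, le_div_iff₀ (by linarith)]
    nlinarith
  have sp := fun (n : ℕ) (hn : 0 < n) =>
    total_split h κ K n (1/σ) hκ (by exact_mod_cast hn) hs0 hKs (hu n).1 (hu n).2.2.2.2 (hloc n).1
  have tl : ∀ n : ℕ, 0 < n → ∀ v : ℝ × ℝ → ℂ, ContDiff ℝ 1 v → (∀ x ∈ frontier (Strip n), v x = 0) → ∀ s > 0,
      Λ * (eD (s * σ) (n * √s) / (n * √s) ^ 2) ≤ Tl χ κ K n v s / n := by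
    intro n hn v hv hb s hs
    have hnR : (0:ℝ) < n := by exact_mod_cast hn
    have := tile_main κ K δ s hκ hK hδ hδ1 hs n hn _ (loc_slab h s hv) (loc_frontier s n hb)
    rw [le_div_iff₀ hnR]
    unfold Tl
    refine le_trans (le_of_eq ?_) this
    ring
  apply le_of_forall_pos_le_add
  intro e he
  have ev1 := side_limit g hg Λ σ hΛ hσ (fun n s => Tl χ κ K n (u n) s / n)
    (fun n hn => (Integrable.div_const (hloc n).1 _).integrableOn)
    (fun n hn => tl n hn (u n) (hu n).1 (hu n).2.2.2.2) (e/2) (by positivity)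
  have ev2 := side_limit g hg Λ σ hΛ hσ (fun n s => Tl χ κ K n (fun y => u n (refl2 y)) s / n)
    (fun n hn => (Integrable.div_const (sp n hn).1 _).integrableOn)
    (fun n hn => tl n hn _ (refl_contDiff (hu n).1) (by
      have hnR : (0:ℝ) < n := by exact_mod_cast hn
      intro x hx
      apply (hu n).2.2.2.2
      rw [frontier_strip n hnR] at hx ⊢
      exact ⟨hx.1, mem_univ _⟩)) (e/2) (by positivity)
  have hlim : Tendsto (fun n : ℕ => m * (egs L n / n) + m * (1 / (n:ℝ)) + e) atTop (𝓝 (m * E L + m * 0 + e)) := by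
    apply Tendsto.add_const
    apply Tendsto.add
    · exact ((hE L hL).comp tendsto_natCast_atTop_atTop).const_mul m
    · exact tendsto_one_div_atTop_nhds_zero_nat.const_mul m
  rw [mul_zero, add_zero] at hlim
  apply ge_of_tendsto hlim
  filter_upwards [ev1, ev2, eventually_gt_atTop 0] with n h1 h2 hn
  have hnR : (0:ℝ) < n := by exact_mod_cast hn
  rw [integral_div] at h1 h2
  have h3 := ((sp n hn).2.trans (hloc n).2).trans (mul_le_mul_of_nonneg_left (hlt n).le hm0)
  have h4 := div_le_div_of_nonneg_right h3 hnR.le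
  have h5 : ((∫ s in Ioc 0 (1/σ), Tl χ κ K n (fun y => u n (refl2 y)) s) + (∫ s in Ioc 0 (1/σ), Tl χ κ K n (u n) s)
      - K ^ 2 / (2 * κ) * n) / n = (∫ s in Ioc 0 (1/σ), Tl χ κ K n (fun y => u n (refl2 y)) s) / n
       + (∫ s in Ioc 0 (1/σ), Tl χ κ K n (u n) s) / n - K ^ 2 / (2 * κ) := by
    rw [sub_div, add_div, mul_div_assoc, div_self hnR.ne', mul_one]
  have h6 : m * (egs L n + 1) / n = m * (egs L n / n) + m * (1 / (n:ℝ)) := by ring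
  rw [h5, h6] at h4
  linarith


set_option maxHeartbeats 800000 in
lemma final_alg (C₀ q I m e : ℝ) (hC : 0 < C₀) (hq : 0 < q) (hq4 : q ≤ 1/4) (hI : -(1/2) ≤ I) (hI0 : I ≤ 0)
    (hm : 1 - 2 * q ≤ m)
    (hmain : 2 * (((1 + (2 * C₀ + 1/4) * q) ^ 3 / (1 - q)) * I / q ^ 4) - (1 + 2 * C₀ * q) ^ 2 / (2 * q ^ 2) ≤ m * e) :
    2 / q ^ 4 * I - (15 * (1 + (1 + (2 * C₀ + 1/4)) ^ 3) + (1 + 2 * C₀) ^ 2) / q ^ 3 ≤ e := by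
  set D := 2 * C₀ + 1/4 with hD
  have hD0 : 0 < D := by positivity
  have h1q : 0 < 1 - q := by linarith
  set P := (1 + D * q) ^ 3 / (1 - q) with hP
  set B := (1 + D) ^ 3 with hB
  have hB0 : 0 < B := by positivity
  have hP0 : 0 < P := by positivity
  have hm0 : 0 < m := by linarith
  have b1 : (1 + D * q) ^ 3 ≤ 1 + B * q := by
    have e1 : q ^ 2 ≤ q := by nlinarith
    have e2 : q ^ 3 ≤ q := by nlinarith
    have : 1 + B * q - (1 + D * q) ^ 3 = q + 3 * D ^ 2 * (q - q ^ 2) + D ^ 3 * (q - q ^ 3) := by rw [hB]; ring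
    have t1 : 0 ≤ 3 * D ^ 2 * (q - q ^ 2) := mul_nonneg (by positivity) (by linarith)
    have t2 : 0 ≤ D ^ 3 * (q - q ^ 3) := mul_nonneg (by positivity) (by linarith)
    linarith
  have b2 : P ≤ (1 + B * q) * (1 + 2 * q) := by
    rw [hP, div_le_iff₀ h1q]
    have : 1 ≤ (1 + 2 * q) * (1 - q) := by nlinarith
    have h0 : 0 ≤ 1 + B * q := by positivity
    nlinarith [mul_le_mul_of_nonneg_left this h0]
  have b3 : P * (1 + 4 * q) ≤ 1 + 15 * (1 + B) * q := by
    have : P * (1 + 4 * q) ≤ (1 + B * q) * (1 + 2 * q) * (1 + 4 * q) := by gcongr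
    have e1 : q ^ 2 ≤ q := by nlinarith
    have e2 : q ^ 3 ≤ q := by nlinarith
    have : 1 + 15 * (1 + B) * q - (1 + B * q) * (1 + 2 * q) * (1 + 4 * q)
        = 9 * q - 8 * q ^ 2 + B * (15 * q - q - 6 * q ^ 2 - 8 * q ^ 3) := by ring
    have t1 : 0 ≤ B * (15 * q - q - 6 * q ^ 2 - 8 * q ^ 3) := mul_nonneg hB0.le (by linarith)
    linarith
  set W := (1 + 2 * C₀) ^ 2 with hW
  have hW0 : 0 < W := by positivity
  have b4 : (1 + 2 * C₀ * q) ^ 2 ≤ W := by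
    rw [hW]
    apply pow_le_pow_left₀ (by positivity)
    nlinarith [mul_le_mul_of_nonneg_left (show q ≤ 1 by linarith) hC.le]
  set X := 2 * (P * I / q ^ 4) - (1 + 2 * C₀ * q) ^ 2 / (2 * q ^ 2) with hX
  have hX0 : X ≤ 0 := by
    have t1 : P * I / q ^ 4 ≤ 0 := div_nonpos_of_nonpos_of_nonneg (mul_nonpos_of_nonneg_of_nonpos hP0.le hI0) (by positivity)
    have t2 : 0 ≤ (1 + 2 * C₀ * q) ^ 2 / (2 * q ^ 2) := by positivity
    linarith
  have step : X * (1 + 4 * q) ≤ e := by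
    have : 1 ≤ m * (1 + 4 * q) := by nlinarith
    have h2 : m * (X * (1 + 4 * q)) ≤ m * e := by nlinarith only [mul_le_mul_of_nonpos_left this hX0, hmain]
    exact le_of_mul_le_mul_left h2 hm0
  refine le_trans ?_ step
  have hX' : X * (1 + 4 * q) = 2 * I * (P * (1 + 4 * q)) / q ^ 4 - (1 + 2 * C₀ * q) ^ 2 * (1 + 4 * q) / (2 * q ^ 2) := by
    rw [hX]; ring
  have s1 : 2 / q ^ 4 * I - 15 * (1 + B) / q ^ 3 ≤ 2 * I * (P * (1 + 4 * q)) / q ^ 4 := by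
    have : 2 / q ^ 4 * I - 15 * (1 + B) / q ^ 3 = (2 * I - 15 * (1 + B) * q) / q ^ 4 := by
      clear_value B
      field_simp
    rw [this]
    apply div_le_div_of_nonneg_right _ (by positivity)
    have hz : 0 ≤ 15 * (1 + B) * q := by positivity
    nlinarith only [mul_le_mul_of_nonpos_left b3 hI0, mul_le_mul_of_nonneg_right hI hz]
  have s2 : (1 + 2 * C₀ * q) ^ 2 * (1 + 4 * q) / (2 * q ^ 2) ≤ W / q ^ 3 := by
    rw [div_le_div_iff₀ (by positivity) (by positivity)]
    have t1 : (1 + 2 * C₀ * q) ^ 2 * (1 + 4 * q) ≤ W * 2 := by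
      apply mul_le_mul b4 (by linarith) (by linarith) hW0.le
    have t2 : q ^ 3 ≤ q ^ 2 := pow_le_pow_of_le_one hq.le (by linarith) (by norm_num)
    calc (1 + 2 * C₀ * q) ^ 2 * (1 + 4 * q) * q ^ 3 ≤ (W * 2) * q ^ 2 := by gcongr
      _ = _ := by ring
  rw [hX', add_div]
  linarith

/-- Lower bound: `E(L) ≥ 2 L^{-4/3} ∫₀¹ g(b) db - C L⁻¹` for small `L`. -/
theorem E_lower_bound (g E : ℝ → ℝ) (hg : IsLimitG g) (hE : IsLimitE E) :
    ∃ L₀ > (0:ℝ), ∃ C > (0:ℝ), ∀ L : ℝ, 0 < L → L < L₀ →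
      E L ≥ 2 * L ^ (-(4:ℝ)/3) * (∫ b in (0:ℝ)..1, g b) - C * L⁻¹ := by
  obtain ⟨C₀, hC₀, hcut⟩ := exists_cut
  refine ⟨1/64, by norm_num, 15 * (1 + (1 + (2 * C₀ + 1/4)) ^ 3) + (1 + 2 * C₀) ^ 2, by positivity, ?_⟩
  intro L hL hL0
  obtain ⟨q, hq, hqL⟩ : ∃ q : ℝ, 0 < q ∧ q ^ 3 = L := by
    refine ⟨L ^ ((1:ℝ)/3), Real.rpow_pos_of_pos hL _, ?_⟩
    rw [← Real.rpow_natCast, ← Real.rpow_mul hL.le]; norm_num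
  have hq4 : q ≤ 1/4 := by
    by_contra hcon
    push Not at hcon
    have : (1/4:ℝ) ^ 3 < q ^ 3 := by gcongr
    norm_num at this
    linarith
  have k2 : L ^ (-(2:ℝ)/3) = 1 / q ^ 2 := by
    rw [← hqL, ← Real.rpow_natCast, ← Real.rpow_mul hq.le, one_div, ← Real.rpow_natCast, ← Real.rpow_neg hq.le]
    norm_num
  have k4 : L ^ (-(4:ℝ)/3) = 1 / q ^ 4 := by
    rw [← hqL, ← Real.rpow_natCast, ← Real.rpow_mul hq.le, one_div, ← Real.rpow_natCast, ← Real.rpow_neg hq.le]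
    norm_num
  obtain ⟨χ, hχ, m1, m2, c1⟩ := hcut q hq hq4
  have hI : -(1/2) ≤ ∫ b in (0:ℝ)..1, g b := by
    have := intervalIntegral.norm_integral_le_of_norm_le_const (f := g) (a := 0) (b := 1) (C := 1/2) (by
      intro x hx
      rw [uIoc_of_le zero_le_one] at hx
      have := g_bounds g hg x hx.1
      rw [Real.norm_eq_abs, abs_le]; constructor <;> linarith)
    rw [Real.norm_eq_abs, sub_zero, abs_one, mul_one] at this
    linarith [(abs_le.1 this).1]
  have hI0 : ∫ b in (0:ℝ)..1, g b ≤ 0 := by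
    rw [intervalIntegral.integral_of_le zero_le_one]
    exact setIntegral_nonpos measurableSet_Ioc (fun x hx => (g_bounds g hg x hx.1).2)
  have hmain := fixed_L g E hg hE hχ L (1 / q ^ 2 + 2 * C₀ / q) q hL (by positivity) hq (by linarith) (by
    rw [k2, add_sub_cancel_left]
    refine c1.trans ?_
    have hm : 1/2 ≤ ∫ y, χ y ^ 2 := by linarith
    calc C₀ / q = 2 * C₀ / q * (1/2) := by ring
      _ ≤ _ := by gcongr)
  rw [k2] at hmain
  have fin := final_alg C₀ q (∫ b in (0:ℝ)..1, g b) (∫ y, χ y ^ 2) (E L) hC₀ hq hq4 hI hI0 m1 (by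
    refine le_trans (le_of_eq ?_) hmain
    have h1q : 1 - q ≠ 0 := by linarith
    have e0 : 1 / q ^ 2 + 2 * C₀ / q = (1 + 2 * C₀ * q) / q ^ 2 := by field_simp
    have e1 : 1 / q ^ 2 + 2 * C₀ / q + 1 / (4 * q) = (1 + (2 * C₀ + 1/4) * q) / q ^ 2 := by field_simp; ring
    rw [e1, e0]
    have hpos : (1 + (2 * C₀ + 1/4) * q) ≠ 0 := by positivity
    generalize (1 + (2 * C₀ + 1/4) * q) = Z at *
    generalize (∫ b in (0:ℝ)..1, g b) = I
    field_simp)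
  rw [k4, ← hqL]
  have : 2 * (1 / q ^ 4) * (∫ b in (0:ℝ)..1, g b) = 2 / q ^ 4 * ∫ b in (0:ℝ)..1, g b := by ring
  rw [this, ← div_eq_mul_inv, hqL]
  rw [hqL] at fin
  exact fin

end
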